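/- (Theorem 22) Let 0 < θ₀ < 1, 0 < θ ≤ 1, 0 < q₀, r, r₀ ≤ ∞, a, a₀, b₀ ∈ SV, and ‖s^{-1/r₀} b₀(s)/a₀(s)‖_{r₀,(0,1)} < ∞; if θ = 1 assume additionally ‖s^{-1/r} a(s)‖_{r,(0,1)} < ∞. Put c₀(t) = a₀(t) ‖s^{-1/r₀} b₀(s)/a₀(s)‖_{r₀,(0,t)} and ρ(t) = t^{1-θ₀} c₀(t). Then (Ā^𝓡_{θ₀,r₀,b₀,q₀,a₀}, A₁)_{θ,r;a} ≅ Ā_{η,r;a^#}, where η = (1-θ)θ₀ + θ and a^#(t) = c₀(t)^{1-θ} a(ρ(t)). -/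

import Mathlib

open MeasureTheory Set ENNReal Filter

noncomputable section

/-- The `L_q` quasi-norm (with respect to Lebesgue measure) of an `ℝ≥0∞`-valued
function over a set of reals; for `q = ∞` it is the essential supremum. -/
def LqNorm (q : ℝ≥0∞) (s : Set ℝ) (g : ℝ → ℝ≥0∞) : ℝ≥0∞ :=
  if q = ∞ then essSup g (volume.restrict s)
  else (∫⁻ t in s, g t ^ q.toReal) ^ q⁻¹.toReal

/-- The weight `s ↦ s ^ (-1/r) * b s`, as an `ℝ≥0∞`-valued function
(`1/∞ = 0` by convention). -/
def svWgt (r : ℝ≥0∞) (b : ℝ → ℝ) : ℝ → ℝ≥0∞ :=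
  fun s => ENNReal.ofReal (s ^ (-(r⁻¹.toReal)) * b s)

/-- `f` and `g` are equivalent on `s`: each is bounded by a constant multiple
of the other there. -/
def EquivOn (s : Set ℝ) (f g : ℝ → ℝ) : Prop :=
  ∃ C : ℝ, 0 < C ∧ ∀ t ∈ s, C⁻¹ * g t ≤ f t ∧ f t ≤ C * g t

/-- A positive measurable function `b` on `(0,∞)` is slowly varying if for every
`ε > 0`, `t ^ ε * b t` is equivalent to a non-decreasing function and
`t ^ (-ε) * b t` is equivalent to a non-increasing function. -/
def SlowlyVarying (b : ℝ → ℝ) : Prop :=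
  AEMeasurable b (volume.restrict (Ioi 0)) ∧ (∀ t ∈ Ioi (0:ℝ), 0 < b t) ∧
    ∀ ε : ℝ, 0 < ε →
      (∃ g : ℝ → ℝ, MonotoneOn g (Ioi 0) ∧ EquivOn (Ioi 0) (fun t => t ^ ε * b t) g) ∧
      (∃ g : ℝ → ℝ, AntitoneOn g (Ioi 0) ∧ EquivOn (Ioi 0) (fun t => t ^ (-ε) * b t) g)

/-- A quasi-Banach space continuously embedded into the ambient (Hausdorff) space `E`,
recorded via its extended-real-valued quasi-norm; the space itself is the set of
vectors of finite quasi-norm. -/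
structure QuasiBanach (E : Type*) [AddCommGroup E] [Module ℝ E] where
  N : E → ℝ≥0∞
  zero : N 0 = 0
  definite : ∀ x, N x = 0 → x = 0
  smul : ∀ (c : ℝ) (x : E), N (c • x) = ENNReal.ofReal |c| * N x
  quasi : ∃ C : ℝ≥0∞, 1 ≤ C ∧ C ≠ ∞ ∧ ∀ x y, N (x + y) ≤ C * (N x + N y)
  complete : ∀ f : ℕ → E,
    (∀ ε : ℝ≥0∞, 0 < ε → ∃ M : ℕ, ∀ m ≥ M, ∀ n ≥ M, N (f m - f n) < ε) →
    (∀ n, N (f n) ≠ ∞) →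
    ∃ g : E, N g ≠ ∞ ∧ Tendsto (fun n => N (f n - g)) atTop (nhds 0)

variable {E : Type*} [AddCommGroup E] [Module ℝ E]

/-- The Peetre K-functional of the couple whose quasi-norms are `N₀`, `N₁`. -/
def Kf (N₀ N₁ : E → ℝ≥0∞) (t : ℝ) (f : E) : ℝ≥0∞ :=
  ⨅ g : E, N₀ g + ENNReal.ofReal t * N₁ (f - g)

/-- The quasi-norm of the real interpolation space `Ā_{θ,q;b}`. -/
def normK (N₀ N₁ : E → ℝ≥0∞) (θ : ℝ) (q : ℝ≥0∞) (b : ℝ → ℝ) (f : E) : ℝ≥0∞ :=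
  LqNorm q (Ioi 0) fun u =>
    ENNReal.ofReal (u ^ (-θ - q⁻¹.toReal) * b u) * Kf N₀ N₁ u f

/-- The quasi-norm of the limiting interpolation space `Ā^𝓛_{σ,r,b,q,a}`. -/
def normL (N₀ N₁ : E → ℝ≥0∞) (σ : ℝ) (r q : ℝ≥0∞) (b a : ℝ → ℝ) (f : E) : ℝ≥0∞ :=
  LqNorm r (Ioi 0) fun t =>
    ENNReal.ofReal (t ^ (-(r⁻¹.toReal)) * (b t / a t)) *
      LqNorm q (Ioo 0 t) fun u =>
        ENNReal.ofReal (u ^ (-σ - q⁻¹.toReal) * a u) * Kf N₀ N₁ u f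

/-- The quasi-norm of the limiting interpolation space `Ā^𝓡_{σ,r,b,q,a}`. -/
def normR (N₀ N₁ : E → ℝ≥0∞) (σ : ℝ) (r q : ℝ≥0∞) (b a : ℝ → ℝ) (f : E) : ℝ≥0∞ :=
  LqNorm r (Ioi 0) fun t =>
    ENNReal.ofReal (t ^ (-(r⁻¹.toReal)) * (b t / a t)) *
      LqNorm q (Ioi t) fun u =>
        ENNReal.ofReal (u ^ (-σ - q⁻¹.toReal) * a u) * Kf N₀ N₁ u f

/-- Two (extended-real-valued) quasi-norms define the same space with
equivalent quasi-norms. -/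
def EquivNorms (nX nY : E → ℝ≥0∞) : Prop :=
  ∃ C : ℝ≥0∞, 0 < C ∧ C ≠ ∞ ∧ ∀ f : E, C⁻¹ * nY f ≤ nX f ∧ nX f ≤ C * nY f

/-!
With `t = exp x`, a slowly varying weight becomes a function whose increments are `O(1) + ε |x - y|`
for every `ε > 0`, and each quasi-norm becomes an `L_q` quasi-norm on the line of a function that
changes by at most a bounded factor over bounded distances, since `K(t, f)` is non-decreasing and
`K(t, f) / t` non-increasing.

For the couple formed by the `𝓡`-space and `A₁`, a decomposition `f = g + (f - g)` that is nearly
optimal for `K(t, f)` gives a Holmstedt-type estimate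
`K(ρ(t), f; 𝓡, A₁) ≈ t ^ (-θ₀) c₀(t) K(t, f; A₀, A₁)`. The lower half is pointwise. The upper half
only holds with the right-hand side replaced by a supremum over `s ≤ t` damped by a small power of
`s / t`. This is harmless: as `θ > 0` there is a power to spare, and on the logarithmic scale taking
a supremum with exponential decay is bounded in every `L_r`, by comparison with sums over integers.

Finally `log ρ` is the map `x ↦ (1 - θ₀) x + log c₀(exp x)`, a sublinear perturbation of a dilation.
It need be neither injective nor continuous, but it has a right inverse up to a bounded error, and
that is enough to substitute `u = ρ(t)` in the `L_r` quasi-norm.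
-/

open scoped NNReal

section Exponential

/-- The exponential with values in `ℝ≥0`: every weight on the logarithmic scale is written
`nnexp (w x)`, which keeps it finite and nonzero when it is cast to `ℝ≥0∞`. -/
def nnexp (x : ℝ) : ℝ≥0 := (Real.exp x).toNNReal

lemma coe_nnexp_ne_zero (x : ℝ) : (nnexp x : ℝ≥0∞) ≠ 0 :=
  ENNReal.coe_ne_zero.2 (Real.toNNReal_pos.2 (Real.exp_pos x)).ne'

lemma ofReal_eq_nnexp_log {x : ℝ} (hx : 0 < x) : ENNReal.ofReal x = nnexp (Real.log x) := by
  rw [nnexp, Real.exp_log hx, ENNReal.ofReal]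

lemma coe_nnexp_zero : (nnexp 0 : ℝ≥0∞) = 1 := by simp [nnexp]

lemma coe_nnexp_add (x y : ℝ) : (nnexp (x + y) : ℝ≥0∞) = nnexp x * nnexp y := by
  rw [← ENNReal.coe_mul, nnexp, Real.exp_add, Real.toNNReal_mul (Real.exp_nonneg x), nnexp, nnexp]

lemma coe_nnexp_rpow (x p : ℝ) : (nnexp x : ℝ≥0∞) ^ p = nnexp (x * p) := by
  change ENNReal.ofReal (Real.exp x) ^ p = ENNReal.ofReal (Real.exp (x * p))
  rw [ENNReal.ofReal_rpow_of_pos (Real.exp_pos x), Real.exp_mul]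

lemma nnexp_le_nnexp_iff {x y : ℝ} : nnexp x ≤ nnexp y ↔ x ≤ y :=
  (Real.toNNReal_le_toNNReal_iff (Real.exp_nonneg y)).trans Real.exp_le_exp

@[gcongr]
lemma nnexp_le_nnexp {x y : ℝ} (h : x ≤ y) : nnexp x ≤ nnexp y :=
  nnexp_le_nnexp_iff.2 h

lemma coe_nnexp_le {x y : ℝ} (h : x ≤ y) : (nnexp x : ℝ≥0∞) ≤ nnexp y :=
  ENNReal.coe_le_coe.2 (nnexp_le_nnexp h)

lemma nnexp_mul_nnexp_mul (x y : ℝ) (Z : ℝ≥0∞) :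
    (nnexp x : ℝ≥0∞) * (nnexp y * Z) = nnexp (x + y) * Z := by
  rw [coe_nnexp_add, mul_assoc]

lemma nnexp_mul_le_iff {x : ℝ} {Y Z : ℝ≥0∞} : nnexp x * Y ≤ Z ↔ Y ≤ nnexp (-x) * Z := by
  rw [← ENNReal.mul_le_mul_iff_right (coe_nnexp_ne_zero x) ENNReal.coe_ne_top (b := Y),
    nnexp_mul_nnexp_mul, add_neg_cancel, coe_nnexp_zero, one_mul]

lemma exists_le_nnexp (D : ℝ≥0) : ∃ c : ℝ, 0 ≤ c ∧ D ≤ nnexp c := by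
  refine ⟨D, D.coe_nonneg, NNReal.coe_le_coe.1 ?_⟩
  rw [nnexp, Real.coe_toNNReal _ (Real.exp_nonneg _)]
  linarith [Real.add_one_le_exp (D : ℝ)]

end Exponential

section SlowlyOscillating

/-- The logarithmic profile `x ↦ log (b (exp x))` of a weight `b` on `(0, ∞)`. -/
def logProfile (b : ℝ → ℝ) (x : ℝ) : ℝ := Real.log (b (Real.exp x))

/-- The increments of `B` are bounded by `C + ε |x - y|` for every `ε > 0`. This is what slow
variation of `b` says about `B = logProfile b`; no measurability is included. -/
def SlowlyOscillating (B : ℝ → ℝ) : Prop :=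
  ∀ ε : ℝ, 0 < ε → ∃ C : ℝ, ∀ x y : ℝ, B x - B y ≤ C + ε * |x - y|

namespace SlowlyOscillating

variable {A B : ℝ → ℝ}

lemma add (hA : SlowlyOscillating A) (hB : SlowlyOscillating B) :
    SlowlyOscillating (A + B) := by
  intro ε hε
  obtain ⟨C, hC⟩ := hA (ε / 2) (half_pos hε)
  obtain ⟨D, hD⟩ := hB (ε / 2) (half_pos hε)
  refine ⟨C + D, fun x y => ?_⟩
  simp only [Pi.add_apply]
  linarith [hC x y, hD x y]

lemma exists_abs_sub_le (hA : SlowlyOscillating A) {ε : ℝ} (hε : 0 < ε) :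
    ∃ C : ℝ, 0 ≤ C ∧ ∀ x y, |A x - A y| ≤ C + ε * |x - y| := by
  obtain ⟨C, hC⟩ := hA ε hε
  exact ⟨C, by simpa using hC 0 0, fun x y =>
    abs_sub_le_iff.2 ⟨hC x y, abs_sub_comm x y ▸ hC y x⟩⟩

lemma const_mul (hA : SlowlyOscillating A) (p : ℝ) : SlowlyOscillating (fun x => p * A x) := by
  intro ε hε
  obtain ⟨C, -, hC⟩ := hA.exists_abs_sub_le (ε := ε / (|p| + 1)) (by positivity)
  refine ⟨|p| * C, fun x y => ?_⟩
  have hp : |p| * (ε / (|p| + 1)) ≤ ε := by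
    rw [← mul_div_assoc, div_le_iff₀ (by positivity)]
    nlinarith [abs_nonneg p]
  calc p * A x - p * A y = p * (A x - A y) := by ring
    _ ≤ |p| * |A x - A y| := (le_abs_self _).trans (abs_mul _ _).le
    _ ≤ |p| * (C + ε / (|p| + 1) * |x - y|) := by gcongr; exact hC x y
    _ = |p| * C + |p| * (ε / (|p| + 1)) * |x - y| := by ring
    _ ≤ |p| * C + ε * |x - y| := by gcongr

lemma sub (hA : SlowlyOscillating A) (hB : SlowlyOscillating B) :
    SlowlyOscillating (A - B) := by
  convert hA.add (hB.const_mul (-1)) using 1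
  ext x
  simp [sub_eq_add_neg]

lemma comp_linear_add (hA : SlowlyOscillating A) (hB : SlowlyOscillating B) (κ : ℝ) :
    SlowlyOscillating (fun x => A (κ * x + B x)) := by
  intro ε hε
  obtain ⟨D, -, hD⟩ := hB.exists_abs_sub_le one_pos
  obtain ⟨C, hC⟩ := hA (ε / (|κ| + 1)) (by positivity)
  refine ⟨C + ε / (|κ| + 1) * D, fun x y => (hC _ _).trans ?_⟩
  have hincr : |κ * x + B x - (κ * y + B y)| ≤ D + (|κ| + 1) * |x - y| := by
    calc |κ * x + B x - (κ * y + B y)| = |κ * (x - y) + (B x - B y)| := by ring_nf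
      _ ≤ |κ| * |x - y| + |B x - B y| := (abs_add_le _ _).trans_eq (by rw [abs_mul])
      _ ≤ D + (|κ| + 1) * |x - y| := by linarith [hD x y]
  calc C + ε / (|κ| + 1) * |κ * x + B x - (κ * y + B y)|
      ≤ C + ε / (|κ| + 1) * (D + (|κ| + 1) * |x - y|) := by gcongr
    _ = C + ε / (|κ| + 1) * D + ε * |x - y| := by field_simp; ring

end SlowlyOscillating

lemma EquivOn.log_sub_log_le {s : Set ℝ} {f g : ℝ → ℝ} (h : EquivOn s f g)
    (hf : ∀ t ∈ s, 0 < f t) :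
    ∃ D : ℝ, ∀ u ∈ s, ∀ v ∈ s, g u ≤ g v → Real.log (f u) - Real.log (f v) ≤ D := by
  obtain ⟨C, hC, hfg⟩ := h
  refine ⟨Real.log (C ^ 2), fun u hu v hv huv => ?_⟩
  have hle : f u ≤ C ^ 2 * f v := by
    calc f u ≤ C * g v := (hfg u hu).2.trans (by gcongr)
      _ = C ^ 2 * (C⁻¹ * g v) := by field_simp
      _ ≤ C ^ 2 * f v := by gcongr; exact (hfg v hv).1
  have := Real.log_le_log (hf u hu) hle
  rw [Real.log_mul (by positivity) (hf v hv).ne'] at this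
  linarith

lemma SlowlyVarying.slowlyOscillating_logProfile {b : ℝ → ℝ} (hb : SlowlyVarying b) :
    SlowlyOscillating (logProfile b) := by
  obtain ⟨-, hpos, hmono⟩ := hb
  have hlog (p x : ℝ) : Real.log (Real.exp x ^ p * b (Real.exp x)) = p * x + logProfile b x := by
    rw [Real.log_mul (Real.rpow_pos_of_pos (Real.exp_pos x) p).ne' (hpos _ (Real.exp_pos x)).ne',
      Real.log_rpow (Real.exp_pos x), Real.log_exp, logProfile]
  have hposOn (p : ℝ) : ∀ t ∈ Ioi (0 : ℝ), 0 < t ^ p * b t := fun t ht =>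
    mul_pos (Real.rpow_pos_of_pos ht p) (hpos t ht)
  intro ε hε
  obtain ⟨⟨g, hg, hbg⟩, ⟨h, hh, hbh⟩⟩ := hmono ε hε
  obtain ⟨C, hC⟩ := hbg.log_sub_log_le (hposOn ε)
  obtain ⟨D, hD⟩ := hbh.log_sub_log_le (hposOn (-ε))
  refine ⟨max C D, fun x y => ?_⟩
  rcases le_total x y with hxy | hyx
  · have := hC _ (Real.exp_pos x) _ (Real.exp_pos y)
      (hg (Real.exp_pos x) (Real.exp_pos y) (Real.exp_le_exp.2 hxy))
    rw [hlog, hlog] at this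
    rw [abs_of_nonpos (sub_nonpos.2 hxy)]
    linarith [le_max_left C D]
  · have := hD _ (Real.exp_pos x) _ (Real.exp_pos y)
      (hh (Real.exp_pos y) (Real.exp_pos x) (Real.exp_le_exp.2 hyx))
    rw [hlog, hlog] at this
    rw [abs_of_nonneg (sub_nonneg.2 hyx)]
    linarith [le_max_right C D]

end SlowlyOscillating

section Moderate

/-- `F` changes by at most a factor `exp c` per unit length and per step: the class of functions
for which values, local norms and sums over integer points are interchangeable. -/
def Moderate (c : ℝ) (F : ℝ → ℝ≥0∞) : Prop :=
  ∀ x y : ℝ, F x ≤ nnexp (c * (1 + |x - y|)) * F y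

namespace Moderate

variable {c d : ℝ} {F G : ℝ → ℝ≥0∞}

lemma le_of_abs_le_one (hF : Moderate c F) (hc : 0 ≤ c) {x y : ℝ} (h : |x - y| ≤ 1) :
    F x ≤ nnexp (c * 2) * F y :=
  (hF x y).trans (by gcongr; linarith)

lemma mul (hF : Moderate c F) (hG : Moderate d G) : Moderate (c + d) (fun x => F x * G x) := by
  intro x y
  calc F x * G x
      ≤ nnexp (c * (1 + |x - y|)) * F y * (nnexp (d * (1 + |x - y|)) * G y) :=
        mul_le_mul' (hF x y) (hG x y)
    _ = nnexp ((c + d) * (1 + |x - y|)) * (F y * G y) := by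
        rw [add_mul, coe_nnexp_add]; ring

end Moderate

lemma SlowlyOscillating.exists_moderate {B : ℝ → ℝ} (hB : SlowlyOscillating B) (s : ℝ) :
    ∃ c : ℝ, 0 ≤ c ∧ Moderate c (fun x => (nnexp (s * x + B x) : ℝ≥0∞)) := by
  obtain ⟨C, hC⟩ := hB 1 one_pos
  refine ⟨|C| + |s| + 1, by positivity, fun x y => ?_⟩
  rw [← coe_nnexp_add]
  refine coe_nnexp_le ?_
  have hs : s * (x - y) ≤ |s| * |x - y| := (le_abs_self _).trans (abs_mul _ _).le
  have hslack : 0 ≤ |C| * |x - y| + |s| := by positivity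
  linarith [hC x y, le_abs_self C]

end Moderate

section QuasiNorm

variable {α : Type*} {mα : MeasurableSpace α} {μ : Measure α} {q : ℝ≥0∞} {f g : α → ℝ≥0∞}

lemma eLpNorm_le_const_mul_of_ae_le {c : ℝ≥0} (h : ∀ᵐ x ∂μ, f x ≤ c * g x) :
    eLpNorm f q μ ≤ c * eLpNorm g q μ :=
  eLpNorm_le_nnreal_smul_eLpNorm_of_ae_le_mul' h q

lemma eLpNorm_le_const_mul {c : ℝ≥0} (h : ∀ x, f x ≤ c * g x) :
    eLpNorm f q μ ≤ c * eLpNorm g q μ :=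
  eLpNorm_le_const_mul_of_ae_le (.of_forall h)

lemma eLpNorm_restrict_le_const_mul {s : Set α} (hs : MeasurableSet s) {c : ℝ≥0}
    (h : ∀ x ∈ s, f x ≤ c * g x) :
    eLpNorm f q (μ.restrict s) ≤ c * eLpNorm g q (μ.restrict s) :=
  eLpNorm_le_const_mul_of_ae_le (ae_restrict_of_forall_mem hs h)

lemma const_mul_eLpNorm_le (c : ℝ≥0∞) :
    c * eLpNorm f q μ ≤ eLpNorm (fun x => c * f x) q μ := by
  rcases eq_or_ne q 0 with rfl | hq
  · simp
  rcases eq_or_ne q ∞ with rfl | hq'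
  · simp only [eLpNorm_exponent_top, eLpNormEssSup, enorm_eq_self]
    exact (ENNReal.essSup_const_mul).ge
  have hpos := ENNReal.toReal_pos hq hq'
  simp only [eLpNorm_eq_lintegral_rpow_enorm_toReal hq hq', enorm_eq_self]
  calc c * (∫⁻ x, f x ^ q.toReal ∂μ) ^ (1 / q.toReal)
      = (c ^ q.toReal * ∫⁻ x, f x ^ q.toReal ∂μ) ^ (1 / q.toReal) := by
        rw [ENNReal.mul_rpow_of_nonneg _ _ (by positivity), ← ENNReal.rpow_mul,
          mul_one_div_cancel hpos.ne', ENNReal.rpow_one]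
    _ ≤ (∫⁻ x, (c * f x) ^ q.toReal ∂μ) ^ (1 / q.toReal) := by
        simp only [ENNReal.mul_rpow_of_nonneg _ _ hpos.le]
        gcongr
        exact lintegral_const_mul_le _ _

lemma eLpNorm_comp_of_measurableEmbedding {β : Type*} {mβ : MeasurableSpace β} {φ : α → β}
    {ν : Measure β} (hφ : MeasurePreserving φ μ ν) (hφ' : MeasurableEmbedding φ)
    (f : β → ℝ≥0∞) (q : ℝ≥0∞) : eLpNorm (fun x => f (φ x)) q μ = eLpNorm f q ν := by
  rw [← hφ.map_eq, hφ'.eLpNorm_map_measure, Function.comp_def]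

lemma exists_eLpNorm_add_measure_le (q : ℝ≥0∞) :
    ∃ C : ℝ≥0, ∀ (f : α → ℝ≥0∞) (μ ν : Measure α),
      eLpNorm f q (μ + ν) ≤ C * (eLpNorm f q μ + eLpNorm f q ν) := by
  rcases eq_or_ne q 0 with rfl | hq
  · simp
  rcases eq_or_ne q ∞ with rfl | hq'
  · refine ⟨1, fun f μ ν => ?_⟩
    simp only [eLpNorm_exponent_top, eLpNormEssSup, enorm_eq_self, ENNReal.coe_one, one_mul]
    refine essSup_le_of_ae_le _ (ae_add_measure_iff.2 ⟨?_, ?_⟩)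
    · filter_upwards [ENNReal.ae_le_essSup f] with x hx using hx.trans le_self_add
    · filter_upwards [ENNReal.ae_le_essSup f] with x hx using hx.trans le_add_self
  refine ⟨(LpAddConst q).toNNReal, fun f μ ν => ?_⟩
  rw [ENNReal.coe_toNNReal (LpAddConst_lt_top q).ne]
  simp only [eLpNorm_eq_lintegral_rpow_enorm_toReal hq hq', lintegral_add_measure, one_div]
  exact ENNReal.rpow_add_le_mul_rpow_add_rpow'' _ _

lemma exists_eLpNorm_restrict_union_le (q : ℝ≥0∞) (μ : Measure α) :
    ∃ C : ℝ≥0, ∀ (f : α → ℝ≥0∞) (s t : Set α), eLpNorm f q (μ.restrict (s ∪ t)) ≤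
      C * (eLpNorm f q (μ.restrict s) + eLpNorm f q (μ.restrict t)) := by
  obtain ⟨C, hC⟩ := exists_eLpNorm_add_measure_le (mα := mα) q
  exact ⟨C, fun f s t =>
    (eLpNorm_mono_measure f (Measure.restrict_union_le s t)).trans (hC f _ _)⟩

end QuasiNorm

section ExponentialDecay

variable {δ : ℝ}

lemma integrable_exp_neg_mul_abs (hδ : 0 < δ) :
    Integrable (fun x : ℝ => Real.exp (-(δ * |x|))) := by
  rw [← integrableOn_univ, ← Iic_union_Ioi (a := (0 : ℝ)), integrableOn_union]
  constructor
  · refine (integrableOn_exp_mul_Iic hδ 0).congr_fun (fun x hx => ?_) measurableSet_Iic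
    simp only [abs_of_nonpos (mem_Iic.1 hx), mul_neg, neg_neg]
  · refine (integrableOn_exp_mul_Ioi (neg_lt_zero.2 hδ) 0).congr_fun (fun x hx => ?_)
      measurableSet_Ioi
    simp only [abs_of_pos (mem_Ioi.1 hx), neg_mul]

lemma eLpNorm_nnexp_neg_mul_abs_lt_top (hδ : 0 < δ) (q : ℝ≥0∞) :
    eLpNorm (fun x : ℝ => (nnexp (-(δ * |x|)) : ℝ≥0∞)) q volume < ∞ := by
  rcases eq_or_ne q 0 with rfl | hq
  · simp
  rcases eq_or_ne q ∞ with rfl | hq'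
  · refine lt_of_le_of_lt ?_ ENNReal.one_lt_top
    rw [eLpNorm_exponent_top, ← coe_nnexp_zero]
    exact essSup_le_of_ae_le _ (.of_forall fun x =>
      coe_nnexp_le (neg_nonpos.2 (mul_nonneg hδ.le (abs_nonneg x))))
  have hpos := ENNReal.toReal_pos hq hq'
  rw [eLpNorm_lt_top_iff_lintegral_rpow_enorm_lt_top hq hq']
  convert (integrable_exp_neg_mul_abs (mul_pos hδ hpos)).lintegral_lt_top using 3 with x
  rw [enorm_eq_self, coe_nnexp_rpow, neg_mul, mul_right_comm]
  rfl

lemma eLpNorm_nnexp_neg_mul_abs_sub (x : ℝ) (q : ℝ≥0∞) :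
    eLpNorm (fun y : ℝ => (nnexp (-(δ * |y - x|)) : ℝ≥0∞)) q volume =
      eLpNorm (fun y : ℝ => (nnexp (-(δ * |y|)) : ℝ≥0∞)) q volume :=
  eLpNorm_comp_of_measurableEmbedding (measurePreserving_sub_right volume x)
    (measurableEmbedding_subRight x) (fun y => (nnexp (-(δ * |y|)) : ℝ≥0∞)) q

lemma moderate_nnexp_neg_mul_abs (hδ : 0 ≤ δ) :
    Moderate δ (fun x => (nnexp (-(δ * |x|)) : ℝ≥0∞)) := by
  intro x y
  rw [← coe_nnexp_add]
  exact coe_nnexp_le (by nlinarith [abs_sub_abs_le_abs_sub y x, abs_sub_comm x y])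

end ExponentialDecay

section Discretization

variable {c : ℝ} {F : ℝ → ℝ≥0∞}

lemma measurePreserving_intFloor :
    MeasurePreserving (fun x : ℝ => ⌊x⌋) volume Measure.count := by
  refine ⟨Int.measurable_floor, Measure.ext_of_singleton fun n => ?_⟩
  rw [Measure.map_apply Int.measurable_floor (measurableSet_singleton n),
    Int.preimage_floor_singleton, Real.volume_Ico, Measure.count_singleton, add_sub_cancel_left,
    ENNReal.ofReal_one]

lemma eLpNorm_comp_intFloor (r : ℝ≥0∞) (f : ℤ → ℝ≥0∞) :
    eLpNorm (fun x : ℝ => f ⌊x⌋) r volume = eLpNorm f r Measure.count :=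
  eLpNorm_comp_measurePreserving (Measurable.of_discrete.aestronglyMeasurable)
    measurePreserving_intFloor

lemma abs_sub_intFloor_le (x : ℝ) : |x - ⌊x⌋| ≤ 1 := by
  rw [Int.self_sub_floor, Int.abs_fract]
  exact (Int.fract_lt_one x).le

namespace Moderate

lemma eLpNorm_le_count (hF : Moderate c F) (hc : 0 ≤ c) (r : ℝ≥0∞) :
    eLpNorm F r volume ≤ nnexp (c * 2) * eLpNorm (fun k : ℤ => F k) r Measure.count := by
  rw [← eLpNorm_comp_intFloor]
  exact eLpNorm_le_const_mul fun x => hF.le_of_abs_le_one hc (abs_sub_intFloor_le x)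

lemma count_le_eLpNorm (hF : Moderate c F) (hc : 0 ≤ c) (r : ℝ≥0∞) :
    eLpNorm (fun k : ℤ => F k) r Measure.count ≤ nnexp (c * 2) * eLpNorm F r volume := by
  rw [← eLpNorm_comp_intFloor]
  exact eLpNorm_le_const_mul fun x =>
    hF.le_of_abs_le_one hc ((abs_sub_comm _ _).trans_le (abs_sub_intFloor_le x))

end Moderate

lemma map_count_le_nsmul {φ : ℤ → ℤ} {n : ℕ} (hφ : ∀ k l, φ k = φ l → |k - l| ≤ n) :
    Measure.map φ Measure.count ≤ ((2 * n + 1 : ℕ) : ℝ≥0∞) • Measure.count := by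
  have hφm : Measurable φ := .of_discrete
  have hfibre (j : ℤ) : Measure.map φ Measure.count {j} ≤ (2 * n + 1 : ℕ) := by
    rw [Measure.map_apply hφm (measurableSet_singleton j)]
    rcases (φ ⁻¹' {j}).eq_empty_or_nonempty with h | ⟨k, hk⟩
    · simp [h]
    have hsub : φ ⁻¹' {j} ⊆ Finset.Icc (k - n) (k + n) := fun l hl => by
      have := abs_le.1 (hφ l k (hl.trans hk.symm))
      rw [Finset.mem_coe, Finset.mem_Icc]
      omega
    refine (measure_mono hsub).trans_eq ?_
    rw [Measure.count_apply_finset, Int.card_Icc]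
    congr 1
    omega
  rw [← Measure.sum_smul_dirac (Measure.map φ Measure.count), Measure.le_iff]
  intro s hs
  rw [Measure.sum_apply _ hs, Measure.smul_apply, Measure.count, Measure.sum_apply _ hs,
    smul_eq_mul, ← ENNReal.tsum_mul_left]
  exact ENNReal.tsum_le_tsum fun j => mul_le_mul_left (hfibre j) _

lemma exists_eLpNorm_count_comp_le (r : ℝ≥0∞) (n : ℕ) :
    ∃ K : ℝ≥0, ∀ φ : ℤ → ℤ, (∀ k l, φ k = φ l → |k - l| ≤ n) → ∀ f : ℤ → ℝ≥0∞,
      eLpNorm (fun k => f (φ k)) r Measure.count ≤ K * eLpNorm f r Measure.count := by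
  refine ⟨(((2 * n + 1 : ℕ) : ℝ≥0∞) ^ (1 / r).toReal).toNNReal, fun φ hφ f => ?_⟩
  rw [ENNReal.coe_toNNReal (ENNReal.rpow_ne_top_of_nonneg ENNReal.toReal_nonneg
    (ENNReal.natCast_ne_top _)), ← smul_eq_mul, ← Function.comp_def, ← eLpNorm_map_measure
    Measurable.of_discrete.aestronglyMeasurable Measurable.of_discrete.aemeasurable]
  exact eLpNorm_le_of_measure_le_smul (map_count_le_nsmul hφ)

lemma eLpNorm_count_iSup_sub_mul_le {G : Type*} [AddGroup G] [MeasurableSpace G]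
    [MeasurableSingletonClass G] (r : ℝ≥0∞) (w f : G → ℝ≥0∞) :
    eLpNorm (fun k => ⨆ l, w (k - l) * f l) r Measure.count ≤
      eLpNorm w r Measure.count * eLpNorm f r Measure.count := by
  rcases eq_or_ne r 0 with rfl | hr
  · simp
  rcases eq_or_ne r ∞ with rfl | hr'
  · simp only [eLpNorm_exponent_top, eLpNormEssSup_count, enorm_eq_self]
    exact iSup_le fun k => iSup_le fun l =>
      mul_le_mul' (le_iSup w (k - l)) (le_iSup f l)
  have hpos := ENNReal.toReal_pos hr hr'
  simp only [eLpNorm_eq_lintegral_rpow_enorm_toReal hr hr', enorm_eq_self, lintegral_count,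
    ← ENNReal.mul_rpow_of_nonneg _ _ (one_div_nonneg.2 hpos.le)]
  gcongr
  calc ∑' k, (⨆ l, w (k - l) * f l) ^ r.toReal
      ≤ ∑' k, ∑' l, w (k - l) ^ r.toReal * f l ^ r.toReal := by
        refine ENNReal.tsum_le_tsum fun k => (ENNReal.le_rpow_inv_iff hpos).1 (iSup_le fun l => ?_)
        rw [ENNReal.le_rpow_inv_iff hpos, ENNReal.mul_rpow_of_nonneg _ _ hpos.le]
        exact ENNReal.le_tsum l
    _ = ∑' l, (∑' k, w (k - l) ^ r.toReal) * f l ^ r.toReal := by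
        rw [ENNReal.tsum_comm]
        exact tsum_congr fun l => ENNReal.tsum_mul_right
    _ = (∑' k, w k ^ r.toReal) * ∑' l, f l ^ r.toReal := by
        rw [← ENNReal.tsum_mul_left]
        exact tsum_congr fun l => by
          rw [← (Equiv.subRight l).tsum_eq fun k => w k ^ r.toReal]; rfl

namespace Moderate

variable {d b δ : ℝ}

lemma exists_eLpNorm_le_of_le_comp (hc : 0 ≤ c) (hd : 0 ≤ d) (hb : 0 ≤ b) (e : ℝ) (r : ℝ≥0∞) :
    ∃ D : ℝ≥0, ∀ (F G : ℝ → ℝ≥0∞) (φ : ℝ → ℝ), Moderate c F → Moderate d G →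
      (∀ x, F x ≤ nnexp e * G (φ x)) → (∀ x y, |x - y| ≤ b * (1 + |φ x - φ y|)) →
      eLpNorm F r volume ≤ D * eLpNorm G r volume := by
  set n := ⌈b * 2⌉₊
  obtain ⟨K, hK⟩ := exists_eLpNorm_count_comp_le r n
  refine ⟨nnexp (c * 2) * (nnexp (e + d * 2) * (K * nnexp (d * 2))), ?_⟩
  intro F G φ hF hG hFG hφ
  have hfibre (k l : ℤ) (hkl : ⌊φ k⌋ = ⌊φ l⌋) : |k - l| ≤ n := by
    have hlt : |φ k - φ l| < 1 := Int.abs_sub_lt_one_of_floor_eq_floor hkl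
    have : |(k : ℝ) - l| ≤ n := calc
      |(k : ℝ) - l| ≤ b * (1 + |φ k - φ l|) := hφ k l
      _ ≤ b * 2 := by gcongr; linarith
      _ ≤ n := Nat.le_ceil _
    exact_mod_cast this
  have hpoint (k : ℤ) : F k ≤ nnexp (e + d * 2) * G ⌊φ k⌋ := by
    rw [← nnexp_mul_nnexp_mul]
    exact (hFG k).trans (mul_le_mul_right (hG.le_of_abs_le_one hd (abs_sub_intFloor_le _)) _)
  push_cast
  simp only [mul_assoc]
  refine (hF.eLpNorm_le_count hc r).trans (mul_le_mul_right ?_ _)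
  refine (eLpNorm_le_const_mul hpoint).trans (mul_le_mul_right ?_ _)
  exact (hK _ hfibre fun k => G k).trans (mul_le_mul_right (hG.count_le_eLpNorm hd r) _)

lemma iSup_nnexp_neg_mul (hδ : 0 ≤ δ) (F : ℝ → ℝ≥0∞) :
    Moderate δ (fun x => ⨆ y, nnexp (-(δ * |x - y|)) * F y) := by
  intro x x'
  refine iSup_le fun y => ?_
  calc nnexp (-(δ * |x - y|)) * F y
      ≤ nnexp (δ * (1 + |x - x'|)) * nnexp (-(δ * |x' - y|)) * F y := by
        have h := moderate_nnexp_neg_mul_abs hδ (x - y) (x' - y)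
        rw [sub_sub_sub_cancel_right] at h
        gcongr
    _ ≤ nnexp (δ * (1 + |x - x'|)) * ⨆ y, nnexp (-(δ * |x' - y|)) * F y := by
        rw [mul_assoc]
        gcongr
        exact le_iSup (fun y => nnexp (-(δ * |x' - y|)) * F y) y

lemma iSup_nnexp_neg_mul_le_int (hF : Moderate c F) (hc : 0 ≤ c) (hδ : 0 ≤ δ) (x : ℝ) :
    ⨆ y, nnexp (-(δ * |x - y|)) * F y ≤
      nnexp (δ * 2 + c * 2) * ⨆ l : ℤ, nnexp (-(δ * |x - l|)) * F l := by
  refine iSup_le fun y => ?_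
  have hnear := abs_sub_intFloor_le y
  have hdecay : (nnexp (-(δ * |x - y|)) : ℝ≥0∞) ≤ nnexp (δ * 2) * nnexp (-(δ * |x - ⌊y⌋|)) :=
    (moderate_nnexp_neg_mul_abs hδ).le_of_abs_le_one hδ
      (by rwa [_root_.sub_sub_sub_cancel_left, abs_sub_comm])
  have hval : F y ≤ nnexp (c * 2) * F ⌊y⌋ := hF.le_of_abs_le_one hc hnear
  calc nnexp (-(δ * |x - y|)) * F y
      ≤ nnexp (δ * 2) * nnexp (-(δ * |x - ⌊y⌋|)) * (nnexp (c * 2) * F ⌊y⌋) :=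
        mul_le_mul' hdecay hval
    _ = nnexp (δ * 2 + c * 2) * (nnexp (-(δ * |x - ⌊y⌋|)) * F ⌊y⌋) := by
        rw [coe_nnexp_add]; ring
    _ ≤ nnexp (δ * 2 + c * 2) * ⨆ l : ℤ, nnexp (-(δ * |x - l|)) * F l := by
        gcongr
        exact le_iSup (fun l : ℤ => nnexp (-(δ * |x - l|)) * F l) ⌊y⌋

lemma exists_eLpNorm_iSup_le (hc : 0 ≤ c) (hδ : 0 < δ) (r : ℝ≥0∞) :
    ∃ D : ℝ≥0, ∀ F : ℝ → ℝ≥0∞, Moderate c F →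
      eLpNorm (fun x => ⨆ y, nnexp (-(δ * |x - y|)) * F y) r volume ≤ D * eLpNorm F r volume := by
  set w : ℤ → ℝ≥0∞ := fun k => nnexp (-(δ * |(k : ℝ)|))
  obtain ⟨W, hW⟩ : ∃ W : ℝ≥0, eLpNorm w r Measure.count = W :=
    (WithTop.ne_top_iff_exists.1 (((moderate_nnexp_neg_mul_abs hδ.le).count_le_eLpNorm hδ.le
      r).trans_lt (ENNReal.mul_lt_top ENNReal.coe_lt_top
        (eLpNorm_nnexp_neg_mul_abs_lt_top hδ r))).ne).imp fun _ h => h.symm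
  refine ⟨nnexp (δ * 2) * (nnexp (δ * 2 + c * 2) * (W * nnexp (c * 2))), fun F hF => ?_⟩
  have hpoint (k : ℤ) : ⨆ y, nnexp (-(δ * |(k : ℝ) - y|)) * F y ≤
      nnexp (δ * 2 + c * 2) * ⨆ l : ℤ, w (k - l) * F l := by
    simpa only [w, Int.cast_sub] using hF.iSup_nnexp_neg_mul_le_int hc hδ.le k
  push_cast
  simp only [mul_assoc]
  refine ((iSup_nnexp_neg_mul hδ.le F).eLpNorm_le_count hδ.le r).trans (mul_le_mul_right ?_ _)
  refine (eLpNorm_le_const_mul hpoint).trans (mul_le_mul_right ?_ _)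
  refine (eLpNorm_count_iSup_sub_mul_le r w _).trans ?_
  rw [hW]
  exact mul_le_mul_right (hF.count_le_eLpNorm hc r) _

end Moderate

end Discretization

lemma Moderate.le_eLpNorm_restrict {c : ℝ} {F : ℝ → ℝ≥0∞} (hF : Moderate c F) (hc : 0 ≤ c)
    {q : ℝ≥0∞} (hq : q ≠ 0) {s : Set ℝ} {x z : ℝ} (hx : x ∈ Icc z (z + 1))
    (hs : Ioo z (z + 1) ⊆ s) : F x ≤ nnexp (c * 2) * eLpNorm F q (volume.restrict s) := by
  have hvol : volume.restrict (Ioo z (z + 1)) univ = 1 := by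
    rw [Measure.restrict_apply_univ, Real.volume_Ioo, add_sub_cancel_left, ENNReal.ofReal_one]
  have hconst : F x = eLpNorm (fun _ => F x) q (volume.restrict (Ioo z (z + 1))) := by
    rw [eLpNorm_const _ hq (fun h => by simp [h] at hvol), hvol, ENNReal.one_rpow, mul_one,
      enorm_eq_self]
  rw [hconst]
  refine (eLpNorm_restrict_le_const_mul measurableSet_Ioo fun y hy => ?_).trans
    (mul_le_mul_right (eLpNorm_mono_measure F (Measure.restrict_mono hs le_rfl)) _)
  refine hF.le_of_abs_le_one hc (abs_sub_le_iff.2 ⟨?_, ?_⟩) <;> linarith [hx.1, hx.2, hy.1, hy.2]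

section HeadNorm

/-- The primitive `t ↦ ‖s ^ (-1/r) b(s)‖_{r,(0,t)}` of a weight on the logarithmic scale:
`β = logProfile b` and `t = exp x`. -/
def headNorm (r : ℝ≥0∞) (β : ℝ → ℝ) (x : ℝ) : ℝ≥0∞ :=
  eLpNorm (fun s => (nnexp (β s) : ℝ≥0∞)) r (volume.restrict (Iio x))

/-- The logarithm of `headNorm`, meaningful where `headNorm` is finite and nonzero. -/
def logHeadNorm (r : ℝ≥0∞) (β : ℝ → ℝ) (x : ℝ) : ℝ :=
  Real.log (headNorm r β x).toReal

variable {r : ℝ≥0∞} {β : ℝ → ℝ}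

lemma headNorm_le_of_forall_le {C ε : ℝ} (hβ : ∀ x y, β x - β y ≤ C + ε * |x - y|) (x y : ℝ) :
    headNorm r β x ≤ nnexp (C + ε * |x - y|) * headNorm r β y := by
  have hpre : (fun s => s + (x - y)) ⁻¹' Iio x = Iio y := by
    ext s
    simp only [mem_preimage, mem_Iio]
    constructor <;> intro h <;> linarith
  have htranslate : headNorm r β x =
      eLpNorm (fun s => (nnexp (β (s + (x - y))) : ℝ≥0∞)) r (volume.restrict (Iio y)) := by
    have hmp := (measurePreserving_add_right volume (x - y)).restrict_preimage_emb
      (measurableEmbedding_addRight (x - y)) (Iio x)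
    rw [hpre] at hmp
    exact (eLpNorm_comp_of_measurableEmbedding hmp (measurableEmbedding_addRight (x - y)) _ r).symm
  rw [htranslate]
  refine eLpNorm_le_const_mul fun s => ?_
  rw [← coe_nnexp_add]
  refine coe_nnexp_le ?_
  have := hβ (s + (x - y)) s
  rw [add_sub_cancel_left] at this
  linarith

lemma headNorm_ne_zero (hβ : SlowlyOscillating β) (hr : r ≠ 0) (x : ℝ) : headNorm r β x ≠ 0 := by
  obtain ⟨c, hc, hmod⟩ := hβ.exists_moderate 0
  simp only [zero_mul, zero_add] at hmod
  have hlower := hmod.le_eLpNorm_restrict hc hr (x := x) (z := x - 1) (s := Iio x)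
    (by constructor <;> linarith) (by rw [sub_add_cancel]; exact Ioo_subset_Iio_self)
  rintro hzero
  rw [← headNorm, hzero, mul_zero, nonpos_iff_eq_zero] at hlower
  exact coe_nnexp_ne_zero _ hlower

lemma headNorm_ne_top (hβ : SlowlyOscillating β) {x₀ : ℝ} (h₀ : headNorm r β x₀ ≠ ∞) (x : ℝ) :
    headNorm r β x ≠ ∞ := by
  obtain ⟨C, hC⟩ := hβ 1 one_pos
  exact ((headNorm_le_of_forall_le hC x x₀).trans_lt
    (ENNReal.mul_lt_top ENNReal.coe_lt_top h₀.lt_top)).ne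

lemma headNorm_eq_nnexp (hβ : SlowlyOscillating β) (hr : r ≠ 0) {x₀ : ℝ}
    (h₀ : headNorm r β x₀ ≠ ∞) (x : ℝ) : headNorm r β x = nnexp (logHeadNorm r β x) := by
  have htop := headNorm_ne_top hβ h₀ x
  rw [logHeadNorm, ← ofReal_eq_nnexp_log (ENNReal.toReal_pos (headNorm_ne_zero hβ hr x) htop),
    ENNReal.ofReal_toReal htop]

lemma slowlyOscillating_logHeadNorm (hβ : SlowlyOscillating β) (hr : r ≠ 0) {x₀ : ℝ}
    (h₀ : headNorm r β x₀ ≠ ∞) : SlowlyOscillating (logHeadNorm r β) := by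
  intro ε hε
  obtain ⟨C, hC⟩ := hβ ε hε
  refine ⟨C, fun x y => ?_⟩
  have h := headNorm_le_of_forall_le (r := r) hC x y
  rw [headNorm_eq_nnexp hβ hr h₀, headNorm_eq_nnexp hβ hr h₀, ← coe_nnexp_add,
    ENNReal.coe_le_coe, nnexp_le_nnexp_iff] at h
  linarith

/- The half line beyond `x` is reflected onto the one before `x`, where slow oscillation compares
`β s` with `β (2 * x - s)` at the cost of the exponential decay. -/
lemma eLpNorm_nnexp_sub_mul_le {C κ : ℝ} (hβ : ∀ x y, β x - β y ≤ C + κ / 2 * |x - y|) (x : ℝ) :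
    eLpNorm (fun s => (nnexp (β s - κ * (s - x)) : ℝ≥0∞)) r (volume.restrict (Ioi x)) ≤
      nnexp C * headNorm r β x := by
  have hpre : (fun s => 2 * x - s) ⁻¹' Iio x = Ioi x := by
    ext s
    simp only [mem_preimage, mem_Iio, mem_Ioi]
    constructor <;> intro h <;> linarith
  have hemb : MeasurableEmbedding fun s : ℝ => 2 * x - s :=
    (MeasurableEquiv.subLeft (2 * x)).measurableEmbedding
  have hmp := (Measure.measurePreserving_sub_left volume (2 * x)).restrict_preimage_emb
    hemb (Iio x)
  rw [hpre] at hmp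
  rw [headNorm, ← eLpNorm_comp_of_measurableEmbedding hmp hemb]
  refine eLpNorm_restrict_le_const_mul measurableSet_Ioi fun s (hs : x < s) => ?_
  rw [← coe_nnexp_add]
  refine coe_nnexp_le ?_
  have := hβ s (2 * x - s)
  rw [abs_of_pos (by linarith)] at this
  linarith

lemma exists_eLpNorm_nnexp_sub_max_le (hβ : SlowlyOscillating β) {κ : ℝ} (hκ : 0 < κ) :
    ∃ D : ℝ≥0, ∀ x, eLpNorm (fun s => (nnexp (β s - κ * max (s - x) 0) : ℝ≥0∞)) r volume ≤
      D * headNorm r β x := by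
  obtain ⟨C, hC⟩ := hβ (κ / 2) (half_pos hκ)
  obtain ⟨D, hD⟩ := exists_eLpNorm_restrict_union_le r (volume : Measure ℝ)
  refine ⟨D * (1 + nnexp C), fun x => ?_⟩
  set f : ℝ → ℝ≥0∞ := fun s => nnexp (β s - κ * max (s - x) 0)
  have hhead : eLpNorm f r (volume.restrict (Iic x)) ≤ (1 : ℝ≥0) * headNorm r β x := by
    rw [← Measure.restrict_congr_set (Iio_ae_eq_Iic (a := x))]
    refine eLpNorm_restrict_le_const_mul measurableSet_Iio fun s (hs : s < x) => ?_
    rw [ENNReal.coe_one, one_mul]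
    exact coe_nnexp_le (by rw [max_eq_right (by linarith)]; linarith)
  have htail : eLpNorm f r (volume.restrict (Ioi x)) ≤ nnexp C * headNorm r β x := by
    refine le_trans ?_ (eLpNorm_nnexp_sub_mul_le hC x)
    refine (eLpNorm_restrict_le_const_mul (c := 1) measurableSet_Ioi
      fun s (hs : x < s) => ?_).trans_eq (by rw [ENNReal.coe_one, one_mul])
    rw [ENNReal.coe_one, one_mul]
    exact coe_nnexp_le (by rw [max_eq_left (by linarith)])
  calc eLpNorm f r volume
      = eLpNorm f r (volume.restrict (Iic x ∪ Ioi x)) := by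
        rw [Iic_union_Ioi, Measure.restrict_univ]
    _ ≤ D * ((1 : ℝ≥0) * headNorm r β x + nnexp C * headNorm r β x) :=
        (hD f _ _).trans (mul_le_mul_right (add_le_add hhead htail) _)
    _ = (D * (1 + nnexp C) : ℝ≥0) * headNorm r β x := by
        push_cast; ring

end HeadNorm

section TailNorm

/-- The iterated quasi-norm `‖t ^ (-1/r) b(t) ‖u ^ (-1/q) H(u)‖_{q,(t,∞)}‖_{r,(0,∞)}` behind the
`𝓡`-spaces, on the logarithmic scale: `β = logProfile b`. -/
def tailNorm (q r : ℝ≥0∞) (β : ℝ → ℝ) (H : ℝ → ℝ≥0∞) : ℝ≥0∞ :=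
  eLpNorm (fun x => nnexp (β x) * eLpNorm H q (volume.restrict (Ioi x))) r volume

variable {q r : ℝ≥0∞} {β : ℝ → ℝ}

lemma eLpNorm_mul_headNorm_le_tailNorm (H : ℝ → ℝ≥0∞) (x : ℝ) :
    eLpNorm H q (volume.restrict (Ioi x)) * headNorm r β x ≤ tailNorm q r β H := by
  refine (const_mul_eLpNorm_le _).trans (le_trans ?_
    (eLpNorm_mono_measure _ (Measure.restrict_le_self (s := Iio x))))
  refine (eLpNorm_restrict_le_const_mul (c := 1) measurableSet_Iio
      fun s (hs : s < x) => ?_).trans_eq (by rw [ENNReal.coe_one, one_mul])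
  rw [ENNReal.coe_one, one_mul, mul_comm]
  gcongr

lemma exists_tailNorm_le (hβ : SlowlyOscillating β) {κ : ℝ} (hκ : 0 < κ) :
    ∃ D : ℝ≥0, ∀ (H : ℝ → ℝ≥0∞) (x : ℝ) (L : ℝ≥0),
      (∀ y, H y ≤ L * nnexp (-(κ * |y - x|))) → tailNorm q r β H ≤ D * (L * headNorm r β x) := by
  obtain ⟨D, hD⟩ := exists_eLpNorm_nnexp_sub_max_le (r := r) hβ (half_pos hκ)
  obtain ⟨W, hW⟩ := WithTop.ne_top_iff_exists.1
    (eLpNorm_nnexp_neg_mul_abs_lt_top (half_pos hκ) q).ne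
  refine ⟨W * D, fun H x L hH => ?_⟩
  have hinner (s : ℝ) : eLpNorm H q (volume.restrict (Ioi s)) ≤
      L * nnexp (-(κ / 2 * max (s - x) 0)) * W := by
    calc eLpNorm H q (volume.restrict (Ioi s))
        ≤ ↑(L * nnexp (-(κ / 2 * max (s - x) 0))) * eLpNorm
            (fun y => (nnexp (-(κ / 2 * |y - x|)) : ℝ≥0∞)) q (volume.restrict (Ioi s)) := by
          refine eLpNorm_restrict_le_const_mul measurableSet_Ioi fun y (hy : s < y) => ?_
          rw [ENNReal.coe_mul, mul_assoc, ← coe_nnexp_add]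
          refine (hH y).trans (mul_le_mul_right (coe_nnexp_le ?_) _)
          have : max (s - x) 0 ≤ |y - x| :=
            max_le (by linarith [le_abs_self (y - x)]) (abs_nonneg _)
          nlinarith
      _ ≤ L * nnexp (-(κ / 2 * max (s - x) 0)) * W := by
          rw [ENNReal.coe_mul]
          gcongr
          refine (eLpNorm_mono_measure _ Measure.restrict_le_self).trans_eq ?_
          rw [eLpNorm_nnexp_neg_mul_abs_sub, ← hW]
          rfl
  calc tailNorm q r β H
      ≤ ↑(L * W) * eLpNorm (fun s => (nnexp (β s - κ / 2 * max (s - x) 0) : ℝ≥0∞)) r volume := by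
        refine eLpNorm_le_const_mul fun s => (mul_le_mul_right (hinner s) _).trans_eq ?_
        rw [sub_eq_add_neg (β s), coe_nnexp_add, ENNReal.coe_mul]
        ring
    _ ≤ ↑(L * W) * (D * headNorm r β x) := mul_le_mul_right (hD x) _
    _ = ↑(W * D) * (L * headNorm r β x) := by
        push_cast; ring

end TailNorm

section LogScale

lemma essSup_restrict_image_exp {S : Set ℝ} (hS : MeasurableSet S) (G : ℝ → ℝ≥0∞) :
    essSup G (volume.restrict (Real.exp '' S)) =
      essSup (fun x => G (Real.exp x)) (volume.restrict S) := by
  have hmap := map_withDensity_abs_det_fderiv_eq_addHaar volume hS.nullMeasurableSet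
    (fun x _ => ((Real.hasDerivAt_exp x).hasFDerivAt).hasFDerivWithinAt (s := S))
    Real.exp_injective.injOn
  simp only [ContinuousLinearMap.det_toSpanSingleton] at hmap
  rw [← hmap, Real.isOpenEmbedding_exp.measurableEmbedding.essSup_map_measure]
  refine le_antisymm (essSup_mono_measure (withDensity_absolutelyContinuous _ _))
    (essSup_mono_measure (withDensity_absolutelyContinuous' ?_ ?_))
  · fun_prop
  · exact Eventually.of_forall fun x => (by simp [Real.exp_pos])

lemma LqNorm_image_exp {q : ℝ≥0∞} (hq : q ≠ 0) {S : Set ℝ} (hS : MeasurableSet S)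
    {F G : ℝ → ℝ≥0∞} (hFG : ∀ x ∈ S, G (Real.exp x) = nnexp (-(q⁻¹.toReal * x)) * F x) :
    LqNorm q (Real.exp '' S) G = eLpNorm F q (volume.restrict S) := by
  rcases eq_or_ne q ∞ with rfl | htop
  · rw [LqNorm, if_pos rfl, eLpNorm_exponent_top, essSup_restrict_image_exp hS]
    refine essSup_congr_ae ((ae_restrict_iff' hS).2 (Eventually.of_forall fun x hx => ?_))
    simpa [coe_nnexp_zero] using hFG x hx
  · have hq₀ : q.toReal ≠ 0 := ENNReal.toReal_ne_zero.2 ⟨hq, htop⟩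
    rw [LqNorm, if_neg htop, eLpNorm_eq_lintegral_rpow_enorm_toReal hq htop,
      lintegral_image_eq_lintegral_abs_deriv_mul hS
        (fun x _ => (Real.hasDerivAt_exp x).hasDerivWithinAt) Real.exp_injective.injOn,
      ENNReal.toReal_inv, one_div]
    congr 1
    refine setLIntegral_congr_fun hS fun x hx => ?_
    rw [hFG x hx, ENNReal.mul_rpow_of_nonneg _ _ ENNReal.toReal_nonneg, coe_nnexp_rpow,
      abs_of_pos (Real.exp_pos x), ofReal_eq_nnexp_log (Real.exp_pos x), Real.log_exp,
      nnexp_mul_nnexp_mul, ENNReal.toReal_inv, enorm_eq_self]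
    have : x + -(q.toReal⁻¹ * x) * q.toReal = 0 := by field_simp; ring
    rw [this, coe_nnexp_zero, one_mul]

lemma ofReal_exp_rpow_mul {b : ℝ → ℝ} (p : ℝ) {x : ℝ} (hb : 0 < b (Real.exp x)) :
    ENNReal.ofReal (Real.exp x ^ p * b (Real.exp x)) = nnexp (p * x + logProfile b x) := by
  rw [ofReal_eq_nnexp_log (mul_pos (Real.rpow_pos_of_pos (Real.exp_pos x) p) hb),
    Real.log_mul (Real.rpow_pos_of_pos (Real.exp_pos x) p).ne' hb.ne',
    Real.log_rpow (Real.exp_pos x), Real.log_exp, logProfile]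

lemma logProfile_div {a b : ℝ → ℝ} (ha : ∀ t ∈ Ioi (0 : ℝ), 0 < a t)
    (hb : ∀ t ∈ Ioi (0 : ℝ), 0 < b t) :
    logProfile (fun t => b t / a t) = logProfile b - logProfile a :=
  funext fun x => Real.log_div (hb _ (Real.exp_pos x)).ne' (ha _ (Real.exp_pos x)).ne'

lemma LqNorm_Ioo_svWgt_eq_headNorm {r : ℝ≥0∞} (hr : r ≠ 0) {b : ℝ → ℝ}
    (hb : ∀ t ∈ Ioi (0 : ℝ), 0 < b t) (x : ℝ) :
    LqNorm r (Ioo 0 (Real.exp x)) (svWgt r b) = headNorm r (logProfile b) x := by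
  rw [← Real.image_exp_Iio]
  refine LqNorm_image_exp hr measurableSet_Iio fun s _ => ?_
  rw [svWgt, ofReal_exp_rpow_mul _ (hb _ (Real.exp_pos s)), neg_mul, coe_nnexp_add]

variable {V : Type*} [AddCommGroup V]

/-- The integrand `u ^ (-θ) b(u) K(u, f)` of the interpolation quasi-norms on the logarithmic
scale: `u = exp x` and `w x = -θ x + logProfile b x`. -/
def weightedK (N₀ N₁ : V → ℝ≥0∞) (w : ℝ → ℝ) (f : V) (x : ℝ) : ℝ≥0∞ :=
  nnexp (w x) * Kf N₀ N₁ (Real.exp x) f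

variable {N₀ N₁ : V → ℝ≥0∞} {q r : ℝ≥0∞} {a b : ℝ → ℝ}

lemma ofReal_mul_Kf_exp_eq (θ p : ℝ) (hb : ∀ t ∈ Ioi (0 : ℝ), 0 < b t) (f : V) (x : ℝ) :
    ENNReal.ofReal (Real.exp x ^ (-θ - p) * b (Real.exp x)) * Kf N₀ N₁ (Real.exp x) f =
      nnexp (-(p * x)) * weightedK N₀ N₁ (fun x => -θ * x + logProfile b x) f x := by
  rw [weightedK, nnexp_mul_nnexp_mul, ofReal_exp_rpow_mul _ (hb _ (Real.exp_pos x))]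
  ring_nf

lemma normK_eq_eLpNorm (hq : q ≠ 0) (θ : ℝ) (hb : ∀ t ∈ Ioi (0 : ℝ), 0 < b t) (f : V) :
    normK N₀ N₁ θ q b f =
      eLpNorm (weightedK N₀ N₁ (fun x => -θ * x + logProfile b x) f) q volume := by
  rw [normK, ← Real.range_exp, ← image_univ, ← Measure.restrict_univ (μ := volume)]
  exact LqNorm_image_exp hq .univ fun x _ => ofReal_mul_Kf_exp_eq θ _ hb f x

/-- The quasi-norm of the `𝓡`-space `Ā^𝓡_{σ,r,b,q,a}` on the logarithmic scale:
`α = logProfile a` and `β = logProfile (b / a)`. -/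
def logNormR (N₀ N₁ : V → ℝ≥0∞) (σ : ℝ) (r q : ℝ≥0∞) (β α : ℝ → ℝ) (f : V) : ℝ≥0∞ :=
  tailNorm q r β (weightedK N₀ N₁ (fun x => -σ * x + α x) f)

lemma normR_eq_logNormR (hq : q ≠ 0) (hr : r ≠ 0) (σ : ℝ) (ha : ∀ t ∈ Ioi (0 : ℝ), 0 < a t)
    (hb : ∀ t ∈ Ioi (0 : ℝ), 0 < b t) :
    normR N₀ N₁ σ r q b a =
      logNormR N₀ N₁ σ r q (logProfile fun t => b t / a t) (logProfile a) := by
  ext f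
  rw [normR, logNormR, tailNorm, ← Real.range_exp, ← image_univ,
    ← Measure.restrict_univ (μ := volume)]
  refine LqNorm_image_exp hr .univ fun x _ => ?_
  rw [nnexp_mul_nnexp_mul, ← neg_mul,
    ← ofReal_exp_rpow_mul (b := fun t => b t / a t) _
      (div_pos (hb _ (Real.exp_pos x)) (ha _ (Real.exp_pos x))),
    ← Real.image_exp_Ioi, LqNorm_image_exp hq measurableSet_Ioi
      fun y _ => ofReal_mul_Kf_exp_eq σ _ ha f y, Measure.restrict_univ]

end LogScale

section CoarseInverse

namespace SlowlyOscillating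

variable {B : ℝ → ℝ} {κ : ℝ}

lemma exists_abs_sub_le_mul_linear_add (hB : SlowlyOscillating B) (hκ : 0 < κ) :
    ∃ b : ℝ, 0 ≤ b ∧
      ∀ x y, |x - y| ≤ b * (1 + |κ * x + B x - (κ * y + B y)|) := by
  obtain ⟨C, hC, hBC⟩ := hB.exists_abs_sub_le (half_pos hκ)
  refine ⟨(C + 1) * (2 / κ), by positivity, fun x y => ?_⟩
  set d := |κ * x + B x - (κ * y + B y)|
  have htri : κ * |x - y| ≤ d + |B x - B y| := by
    calc κ * |x - y| = |κ * (x - y)| := by rw [abs_mul, abs_of_pos hκ]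
      _ = |κ * x + B x - (κ * y + B y) - (B x - B y)| := by ring_nf
      _ ≤ d + |B x - B y| := abs_sub _ _
  have hd : 0 ≤ d := abs_nonneg _
  calc |x - y| = 2 / κ * (κ / 2 * |x - y|) := by field_simp
    _ ≤ 2 / κ * ((C + 1) * (1 + d)) := by
        refine mul_le_mul_of_nonneg_left ?_ (by positivity)
        nlinarith [hBC x y, mul_nonneg hC hd]
    _ = (C + 1) * (2 / κ) * (1 + d) := by ring

lemma exists_linear_add_near (hB : SlowlyOscillating B) (hκ : 0 < κ) :
    ∃ b : ℝ, 0 ≤ b ∧ ∀ z, ∃ x, |κ * x + B x - z| ≤ b := by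
  obtain ⟨C, hC, hBC⟩ := hB.exists_abs_sub_le (half_pos hκ)
  have hbound (x y : ℝ) := abs_sub_le_iff.1 (hBC x y)
  refine ⟨2 * κ + C, by positivity, fun z => ?_⟩
  set S : Set ℝ := {x | κ * x + B x ≤ z}
  have hnonempty : S.Nonempty := by
    refine ⟨-(2 / κ * (|z - B 0| + C)), ?_⟩
    set u := 2 / κ * (|z - B 0| + C) with hu
    have hκu : κ * u = 2 * (|z - B 0| + C) := by rw [hu]; field_simp
    have h := (hbound (-u) 0).1
    rw [sub_zero, abs_neg, abs_of_nonneg (by positivity)] at h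
    change κ * -u + B (-u) ≤ z
    linarith [neg_abs_le (z - B 0)]
  have hbdd : BddAbove S := by
    refine ⟨2 / κ * (|z - B 0| + C), fun x (hx : κ * x + B x ≤ z) => ?_⟩
    rcases le_total x 0 with hx₀ | hx₀
    · exact hx₀.trans (by positivity)
    have h := (hbound x 0).2
    rw [sub_zero, abs_of_nonneg hx₀] at h
    have : x * κ ≤ 2 * (|z - B 0| + C) := by linarith [le_abs_self (z - B 0)]
    calc x ≤ 2 * (|z - B 0| + C) / κ := (le_div_iff₀ hκ).2 this
      _ = 2 / κ * (|z - B 0| + C) := by ring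
  obtain ⟨x, hxS, hx⟩ := exists_lt_of_lt_csSup hnonempty (sub_one_lt (sSup S))
  have hle : κ * x + B x ≤ z := hxS
  have hlt : z < κ * (x + 1) + B (x + 1) :=
    not_le.1 fun h => absurd (le_csSup hbdd (show x + 1 ∈ S from h)) (by linarith)
  have hstep := (hbound (x + 1) x).1
  rw [add_sub_cancel_left, abs_one] at hstep
  exact ⟨x, abs_sub_le_iff.2 ⟨by linarith, by linarith⟩⟩

lemma exists_coarse_rightInverse (hB : SlowlyOscillating B) (hκ : 0 < κ) :
    ∃ (ψ : ℝ → ℝ) (b : ℝ), 0 ≤ b ∧ (∀ z, |κ * ψ z + B (ψ z) - z| ≤ b) ∧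
      ∀ z z', |z - z'| ≤ b * (1 + |ψ z - ψ z'|) := by
  obtain ⟨b, hb, hnear⟩ := hB.exists_linear_add_near hκ
  choose ψ hψ using hnear
  obtain ⟨C, hC, hBC⟩ := hB.exists_abs_sub_le one_pos
  refine ⟨ψ, 2 * b + C + κ + 1, by positivity, fun z => (hψ z).trans (by linarith),
    fun z z' => ?_⟩
  have hz := abs_sub_le_iff.1 (hψ z)
  have hz' := abs_sub_le_iff.1 (hψ z')
  have hB' := abs_sub_le_iff.1 (hBC (ψ z) (ψ z'))
  have hκ₁ : κ * (ψ z - ψ z') ≤ κ * |ψ z - ψ z'| := by gcongr; exact le_abs_self _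
  have hκ₂ : -(κ * |ψ z - ψ z'|) ≤ κ * (ψ z - ψ z') := by
    rw [← mul_neg]; gcongr; exact neg_abs_le _
  have hslack : 0 ≤ (2 * b + C) * |ψ z - ψ z'| := by positivity
  exact abs_sub_le_iff.2 ⟨by linarith, by linarith⟩

end SlowlyOscillating

end CoarseInverse

section KFunctional

variable {V : Type*} [AddCommGroup V] {N₁ : V → ℝ≥0∞}

lemma Kf_le_add (N₀ N₁ : V → ℝ≥0∞) (t : ℝ) (f g : V) :
    Kf N₀ N₁ t f ≤ N₀ g + ENNReal.ofReal t * N₁ (f - g) :=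
  iInf_le _ g

lemma Kf_exp_le_nnexp_abs_mul (N₀ N₁ : V → ℝ≥0∞) (f : V) (x y : ℝ) :
    Kf N₀ N₁ (Real.exp x) f ≤ nnexp |x - y| * Kf N₀ N₁ (Real.exp y) f := by
  rw [Kf, Kf, ENNReal.mul_iInf_of_ne (coe_nnexp_ne_zero _) ENNReal.coe_ne_top]
  refine iInf_mono fun g => ?_
  rw [mul_add, ← mul_assoc, ofReal_eq_nnexp_log (Real.exp_pos x),
    ofReal_eq_nnexp_log (Real.exp_pos y), Real.log_exp, Real.log_exp, ← coe_nnexp_add]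
  gcongr
  · refine le_mul_of_one_le_left' ?_
    rw [← coe_nnexp_zero]
    exact coe_nnexp_le (abs_nonneg _)
  · linarith [le_abs_self (x - y)]

lemma SlowlyOscillating.exists_moderate_weightedK {B : ℝ → ℝ} (hB : SlowlyOscillating B) (s : ℝ)
    (N₀ N₁ : V → ℝ≥0∞) :
    ∃ c : ℝ, 0 ≤ c ∧ ∀ f, Moderate c (weightedK N₀ N₁ (fun x => s * x + B x) f) := by
  obtain ⟨c, hc, hmod⟩ := hB.exists_moderate s
  refine ⟨c + 1, by positivity, fun f => hmod.mul fun x y => ?_⟩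
  refine (Kf_exp_le_nnexp_abs_mul N₀ N₁ f x y).trans ?_
  gcongr
  linarith [abs_nonneg (x - y)]

/-- A functional on an abelian group that is symmetric, vanishes at `0` and satisfies the triangle
inequality up to a constant: what the reiteration argument needs to know about `A₁`. -/
structure IsQuasiSeminorm (N : V → ℝ≥0∞) : Prop where
  map_zero : N 0 = 0
  map_neg : ∀ x, N (-x) = N x
  add_le : ∃ A : ℝ≥0, 1 ≤ A ∧ ∀ x y, N (x + y) ≤ A * (N x + N y)

namespace IsQuasiSeminorm

lemma Kf_le (hN₁ : IsQuasiSeminorm N₁) (N₀ : V → ℝ≥0∞) (t : ℝ) (f : V) :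
    Kf N₀ N₁ t f ≤ N₀ f := by
  simpa [hN₁.map_zero] using Kf_le_add N₀ N₁ t f f

lemma exists_Kf_le_add (hN₁ : IsQuasiSeminorm N₁) (N₀ : V → ℝ≥0∞) :
    ∃ A : ℝ≥0, ∀ t f g,
      Kf N₀ N₁ t f ≤ A * (Kf N₀ N₁ t g + ENNReal.ofReal t * N₁ (f - g)) := by
  obtain ⟨A, hA, htri⟩ := hN₁.add_le
  refine ⟨A, fun t f g => ?_⟩
  rw [Kf.eq_def N₀ N₁ t g, ENNReal.iInf_add, ENNReal.mul_iInf (by simp)]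
  refine le_iInf fun h => (Kf_le_add N₀ N₁ t f h).trans ?_
  have hsplit : N₁ (f - h) ≤ A * (N₁ (g - h) + N₁ (f - g)) := by
    simpa using htri (g - h) (f - g)
  calc N₀ h + ENNReal.ofReal t * N₁ (f - h)
      ≤ A * N₀ h + ENNReal.ofReal t * (A * (N₁ (g - h) + N₁ (f - g))) := by
        gcongr
        exact le_mul_of_one_le_left' (by exact_mod_cast hA)
    _ = A * (N₀ h + ENNReal.ofReal t * N₁ (g - h) + ENNReal.ofReal t * N₁ (f - g)) := by ring

lemma exists_mul_Kf_le_Kf (hN₁ : IsQuasiSeminorm N₁) (N₀ N : V → ℝ≥0∞) (D : ℝ≥0) :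
    ∃ C : ℝ≥0, ∀ w x : ℝ, (∀ g, nnexp w * Kf N₀ N₁ (Real.exp x) g ≤ D * N g) →
      ∀ f, nnexp w * Kf N₀ N₁ (Real.exp x) f ≤ C * Kf N N₁ (Real.exp (x + w)) f := by
  obtain ⟨A, hA⟩ := hN₁.exists_Kf_le_add N₀
  refine ⟨A * (D + 1), fun w x hg f => ?_⟩
  rw [Kf.eq_def N N₁, ENNReal.mul_iInf fun h => absurd h ENNReal.coe_ne_top]
  refine le_iInf fun g => ?_
  have hexp : ENNReal.ofReal (Real.exp (x + w)) = nnexp w * ENNReal.ofReal (Real.exp x) := by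
    rw [add_comm, Real.exp_add, ENNReal.ofReal_mul (Real.exp_nonneg w)]; rfl
  calc nnexp w * Kf N₀ N₁ (Real.exp x) f
      ≤ nnexp w * (A * (Kf N₀ N₁ (Real.exp x) g + ENNReal.ofReal (Real.exp x) * N₁ (f - g))) := by
        gcongr
        exact hA _ f g
    _ = A * (nnexp w * Kf N₀ N₁ (Real.exp x) g +
          ENNReal.ofReal (Real.exp (x + w)) * N₁ (f - g)) := by
        rw [hexp]; ring
    _ ≤ A * ((D + 1) * N g + (D + 1) * (ENNReal.ofReal (Real.exp (x + w)) * N₁ (f - g))) := by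
        refine mul_le_mul_right (add_le_add ?_ ?_) _
        · exact (hg g).trans (by gcongr; exact le_self_add)
        · exact le_mul_of_one_le_left' le_add_self
    _ = ↑(A * (D + 1)) * (N g + ENNReal.ofReal (Real.exp (x + w)) * N₁ (f - g)) := by
        push_cast; ring

end IsQuasiSeminorm

lemma QuasiBanach.isQuasiSeminorm {E : Type*} [AddCommGroup E] [Module ℝ E] (A : QuasiBanach E) :
    IsQuasiSeminorm A.N where
  map_zero := A.zero
  map_neg x := by simpa using A.smul (-1) x
  add_le := by
    obtain ⟨C, hC, htop, hadd⟩ := A.quasi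
    lift C to ℝ≥0 using htop
    exact ⟨C, by exact_mod_cast hC, hadd⟩

end KFunctional

section Holmstedt

variable {V : Type*} [AddCommGroup V] {N₀ N₁ : V → ℝ≥0∞} {σ : ℝ} {r q : ℝ≥0∞} {α β γ : ℝ → ℝ}

lemma IsQuasiSeminorm.exists_weightedK_le_Kf_logNormR (hN₁ : IsQuasiSeminorm N₁)
    (N₀ : V → ℝ≥0∞) (σ : ℝ) (hα : SlowlyOscillating α) (hβ : SlowlyOscillating β)
    (hr : r ≠ 0) (hq : q ≠ 0) {x₀ : ℝ} (h₀ : headNorm r β x₀ ≠ ∞) :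
    ∃ C : ℝ≥0, ∀ f x,
      weightedK N₀ N₁ (fun x => -σ * x + (α x + logHeadNorm r β x)) f x ≤
        C * Kf (logNormR N₀ N₁ σ r q β α) N₁
          (Real.exp (x + (-σ * x + (α x + logHeadNorm r β x)))) f := by
  obtain ⟨c, hc, hmod⟩ := hα.exists_moderate_weightedK (-σ) N₀ N₁
  obtain ⟨C, hC⟩ := hN₁.exists_mul_Kf_le_Kf N₀ (logNormR N₀ N₁ σ r q β α) (nnexp (c * 2))
  refine ⟨C, fun f x => hC _ x (fun g => ?_) f⟩
  set H := weightedK N₀ N₁ (fun x => -σ * x + α x) g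
  calc nnexp (-σ * x + (α x + logHeadNorm r β x)) * Kf N₀ N₁ (Real.exp x) g
      = H x * headNorm r β x := by
        rw [← add_assoc, coe_nnexp_add, headNorm_eq_nnexp hβ hr h₀]
        change _ = nnexp (-σ * x + α x) * Kf N₀ N₁ (Real.exp x) g * _
        ring
    _ ≤ nnexp (c * 2) * eLpNorm H q (volume.restrict (Ioi x)) * headNorm r β x := by
        gcongr
        exact (hmod g).le_eLpNorm_restrict hc hq (left_mem_Icc.2 (by linarith)) Ioo_subset_Ioi_self
    _ ≤ nnexp (c * 2) * logNormR N₀ N₁ σ r q β α g := by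
        rw [mul_assoc]
        gcongr
        exact eLpNorm_mul_headNorm_le_tailNorm H x

/-- The element `g` realises the K-functional of `f` at `exp x` at the level `M`, in the
normalisation in which `M` also bounds the values of `u ^ (-σ) c(u) K(u, f)` for `u ≤ exp x`, with
decay at rate `ε`; here `w x = -σ x + log (c (exp x))`. -/
structure NearOptimal (N₀ N₁ : V → ℝ≥0∞) (w : ℝ → ℝ) (ε : ℝ) (f g : V) (x : ℝ) (M : ℝ≥0) :
    Prop where
  weightedK_le : ∀ y ≤ x, weightedK N₀ N₁ w f y ≤ M * nnexp (-(ε * (x - y)))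
  left_le : N₀ g ≤ M * nnexp (-w x)
  right_le : ENNReal.ofReal (Real.exp x) * N₁ (f - g) ≤ M * nnexp (-w x)

namespace NearOptimal

variable {C κ ε : ℝ} {f g : V} {x y : ℝ} {M : ℝ≥0}

lemma weightedK_le_of_le (hN₁ : IsQuasiSeminorm N₁)
    (h : NearOptimal N₀ N₁ (fun x => -σ * x + (α x + γ x)) ε f g x M)
    (hα : ∀ x y, α x - α y ≤ C + κ * |x - y|) (hκσ : 2 * κ ≤ σ) (hxy : x ≤ y) :
    weightedK N₀ N₁ (fun x => -σ * x + α x) g y ≤ M * nnexp (C - γ x - κ * |y - x|) := by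
  calc nnexp (-σ * y + α y) * Kf N₀ N₁ (Real.exp y) g
      ≤ nnexp (-σ * y + α y) * (M * nnexp (-(-σ * x + (α x + γ x)))) := by
        gcongr
        exact (hN₁.Kf_le N₀ _ g).trans h.left_le
    _ = M * nnexp (-σ * y + α y + -(-σ * x + (α x + γ x))) := by
        rw [mul_left_comm, ← coe_nnexp_add]
    _ ≤ M * nnexp (C - γ x - κ * |y - x|) := by
        gcongr
        have := hα y x
        rw [abs_of_nonneg (sub_nonneg.2 hxy)] at this ⊢
        nlinarith

lemma weightedK_self_le
    (h : NearOptimal N₀ N₁ (fun x => -σ * x + (α x + γ x)) ε f g x M)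
    (hγ : ∀ x y, γ x - γ y ≤ C + κ * |x - y|) (hκε : 2 * κ ≤ ε) (hyx : y ≤ x) :
    weightedK N₀ N₁ (fun x => -σ * x + α x) f y ≤ M * nnexp (C - γ x - κ * |y - x|) := by
  calc weightedK N₀ N₁ (fun x => -σ * x + α x) f y
      = nnexp (-γ y) * weightedK N₀ N₁ (fun x => -σ * x + (α x + γ x)) f y := by
        rw [weightedK, weightedK, nnexp_mul_nnexp_mul]
        ring_nf
    _ ≤ nnexp (-γ y) * (M * nnexp (-(ε * (x - y)))) := by
        gcongr
        exact h.weightedK_le y hyx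
    _ = M * nnexp (-γ y + -(ε * (x - y))) := by
        rw [coe_nnexp_add]; ring
    _ ≤ M * nnexp (C - γ x - κ * |y - x|) := by
        gcongr
        have := hγ x y
        rw [abs_sub_comm y x, abs_of_nonneg (sub_nonneg.2 hyx)] at *
        nlinarith

lemma mul_right_le
    (h : NearOptimal N₀ N₁ (fun x => -σ * x + (α x + γ x)) ε f g x M)
    (hα : ∀ x y, α x - α y ≤ C + κ * |x - y|) (hκσ : 2 * κ ≤ 1 - σ) (hyx : y ≤ x) :
    nnexp (-σ * y + α y) * (ENNReal.ofReal (Real.exp y) * N₁ (f - g)) ≤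
      M * nnexp (C - γ x - κ * |y - x|) := by
  have hexp : ENNReal.ofReal (Real.exp y) = nnexp (y - x) * ENNReal.ofReal (Real.exp x) := by
    rw [← sub_add_cancel y x, Real.exp_add, ENNReal.ofReal_mul (Real.exp_nonneg _),
      sub_add_cancel]
    rfl
  calc nnexp (-σ * y + α y) * (ENNReal.ofReal (Real.exp y) * N₁ (f - g))
      = nnexp (-σ * y + α y + (y - x)) * (ENNReal.ofReal (Real.exp x) * N₁ (f - g)) := by
        rw [hexp, mul_assoc (nnexp _ : ℝ≥0∞), nnexp_mul_nnexp_mul]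
    _ ≤ nnexp (-σ * y + α y + (y - x)) * (M * nnexp (-(-σ * x + (α x + γ x)))) :=
        mul_le_mul_right h.right_le _
    _ = M * nnexp (-σ * y + α y + (y - x) + -(-σ * x + (α x + γ x))) := by
        rw [mul_left_comm, ← coe_nnexp_add]
    _ ≤ M * nnexp (C - γ x - κ * |y - x|) := by
        gcongr
        have := hα y x
        rw [abs_sub_comm y x, abs_of_nonneg (sub_nonneg.2 hyx)] at *
        nlinarith

end NearOptimal

lemma IsQuasiSeminorm.exists_weightedK_le_of_nearOptimal (hN₁ : IsQuasiSeminorm N₁)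
    (N₀ : V → ℝ≥0∞) {C κ ε : ℝ} (hα : ∀ x y, α x - α y ≤ C + κ * |x - y|)
    (hγ : ∀ x y, γ x - γ y ≤ C + κ * |x - y|) (hκ : 2 * κ ≤ min ε (min σ (1 - σ))) :
    ∃ D : ℝ≥0, ∀ f g x (M : ℝ≥0),
      NearOptimal N₀ N₁ (fun x => -σ * x + (α x + γ x)) ε f g x M →
      ∀ y, weightedK N₀ N₁ (fun x => -σ * x + α x) g y ≤
        ↑(D * M * nnexp (-γ x)) * nnexp (-(κ * |y - x|)) := by
  obtain ⟨hκε, hκσ, hκσ'⟩ : 2 * κ ≤ ε ∧ 2 * κ ≤ σ ∧ 2 * κ ≤ 1 - σ := by simpa using hκ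
  obtain ⟨A, hA⟩ := hN₁.exists_Kf_le_add N₀
  refine ⟨(1 + A * 2) * nnexp C, fun f g x M h y => ?_⟩
  set w := -σ * y + α y
  set B : ℝ≥0∞ := M * nnexp (C - γ x - κ * |y - x|) with hB
  have hbound : weightedK N₀ N₁ (fun x => -σ * x + α x) g y ≤ (1 + A * 2) * B := by
    rcases le_total x y with hxy | hyx
    · exact (h.weightedK_le_of_le hN₁ hα hκσ hxy).trans (le_mul_of_one_le_left' le_self_add)
    · calc nnexp w * Kf N₀ N₁ (Real.exp y) g
          ≤ nnexp w * (A * (Kf N₀ N₁ (Real.exp y) f +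
              ENNReal.ofReal (Real.exp y) * N₁ (g - f))) := by
            gcongr
            exact hA _ g f
        _ = A * (nnexp w * Kf N₀ N₁ (Real.exp y) f +
              nnexp w * (ENNReal.ofReal (Real.exp y) * N₁ (f - g))) := by
            rw [← neg_sub f g, hN₁.map_neg]; ring
        _ ≤ A * (B + B) := by
            gcongr
            · exact h.weightedK_self_le hγ hκε hyx
            · exact h.mul_right_le hα hκσ' hyx
        _ ≤ (1 + A * 2) * B := by
            rw [← two_mul, ← mul_assoc]; gcongr; exact le_add_self
  refine hbound.trans_eq ?_
  rw [hB, sub_eq_add_neg, sub_eq_add_neg, coe_nnexp_add, coe_nnexp_add]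
  push_cast; ring

lemma exists_nearOptimal {w : ℝ → ℝ} {ε : ℝ} {f : V} {x : ℝ} {M : ℝ≥0} {S : ℝ≥0∞} (hSM : S < M)
    (hS : ∀ y ≤ x, weightedK N₀ N₁ w f y ≤ S * nnexp (-(ε * (x - y)))) :
    ∃ g, NearOptimal N₀ N₁ w ε f g x M := by
  have hK : Kf N₀ N₁ (Real.exp x) f < M * nnexp (-w x) := by
    have hx := hS x le_rfl
    rw [sub_self, mul_zero, neg_zero, coe_nnexp_zero, mul_one, weightedK, nnexp_mul_le_iff,
      mul_comm] at hx
    exact hx.trans_lt (ENNReal.mul_lt_mul_left (coe_nnexp_ne_zero _) ENNReal.coe_ne_top hSM)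
  obtain ⟨g, hg⟩ := iInf_lt_iff.1 hK
  exact ⟨g, fun y hy => (hS y hy).trans (by gcongr),
    le_self_add.trans hg.le, le_add_self.trans hg.le⟩

lemma IsQuasiSeminorm.exists_Kf_logNormR_le_of_nearOptimal (hN₁ : IsQuasiSeminorm N₁)
    (N₀ : V → ℝ≥0∞) (hσ : 0 < σ) (hσ' : σ < 1) (q : ℝ≥0∞) (hα : SlowlyOscillating α)
    (hβ : SlowlyOscillating β) (hr : r ≠ 0) {x₀ : ℝ} (h₀ : headNorm r β x₀ ≠ ∞) {ε : ℝ}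
    (hε : 0 < ε) :
    ∃ D : ℝ≥0, ∀ f g x (M : ℝ≥0),
      NearOptimal N₀ N₁ (fun x => -σ * x + (α x + logHeadNorm r β x)) ε f g x M →
      Kf (logNormR N₀ N₁ σ r q β α) N₁
        (Real.exp (x + (-σ * x + (α x + logHeadNorm r β x)))) f ≤ D * M := by
  obtain ⟨κ, hκ, hκ'⟩ : ∃ κ : ℝ, 0 < κ ∧ 2 * κ ≤ min ε (min σ (1 - σ)) :=
    ⟨min ε (min σ (1 - σ)) / 2, half_pos (lt_min hε (lt_min hσ (sub_pos.2 hσ'))), by linarith⟩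
  obtain ⟨C, hC⟩ := hα κ hκ
  obtain ⟨C', hC'⟩ := slowlyOscillating_logHeadNorm hβ hr h₀ κ hκ
  obtain ⟨D, hD⟩ := hN₁.exists_weightedK_le_of_nearOptimal N₀ (C := max C C')
    (fun x y => (hC x y).trans (by gcongr; exact le_max_left _ _))
    (fun x y => (hC' x y).trans (by gcongr; exact le_max_right _ _)) hκ'
  obtain ⟨T, hT⟩ := exists_tailNorm_le (q := q) (r := r) hβ hκ
  refine ⟨T * D + 1, fun f g x M hg => ?_⟩
  have hleft : logNormR N₀ N₁ σ r q β α g ≤ T * D * M := by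
    refine (hT _ x _ (hD f g x M hg)).trans_eq ?_
    rw [headNorm_eq_nnexp hβ hr h₀, ENNReal.coe_mul, mul_assoc, ← coe_nnexp_add, neg_add_cancel,
      coe_nnexp_zero, mul_one, ENNReal.coe_mul, mul_assoc]
  have hright : ENNReal.ofReal (Real.exp (x + (-σ * x + (α x + logHeadNorm r β x)))) *
      N₁ (f - g) ≤ M := by
    rw [add_comm, Real.exp_add, ENNReal.ofReal_mul (Real.exp_nonneg _), mul_assoc]
    exact nnexp_mul_le_iff.2 (hg.right_le.trans_eq (mul_comm _ _))
  refine (Kf_le_add _ _ _ f g).trans ((add_le_add hleft hright).trans_eq ?_)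
  push_cast
  ring

lemma IsQuasiSeminorm.exists_Kf_logNormR_le (hN₁ : IsQuasiSeminorm N₁) (N₀ : V → ℝ≥0∞)
    (hσ : 0 < σ) (hσ' : σ < 1) (q : ℝ≥0∞) (hα : SlowlyOscillating α) (hβ : SlowlyOscillating β)
    (hr : r ≠ 0) {x₀ : ℝ} (h₀ : headNorm r β x₀ ≠ ∞) {ε : ℝ} (hε : 0 < ε) :
    ∃ D : ℝ≥0, ∀ f x (S : ℝ≥0∞),
      (∀ y ≤ x, weightedK N₀ N₁ (fun x => -σ * x + (α x + logHeadNorm r β x)) f y ≤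
        S * nnexp (-(ε * (x - y)))) →
      Kf (logNormR N₀ N₁ σ r q β α) N₁
        (Real.exp (x + (-σ * x + (α x + logHeadNorm r β x)))) f ≤ D * S := by
  obtain ⟨D, hD⟩ := hN₁.exists_Kf_logNormR_le_of_nearOptimal N₀ hσ hσ' q hα hβ hr h₀ hε
  refine ⟨D + 1, fun f x S hS => ENNReal.le_mul_of_forall_lt (.inl (by simp)) (.inl (by simp))
    fun D' hD' M hM => ?_⟩
  rcases eq_or_ne M ∞ with rfl | hM'
  · simp [(zero_le.trans_lt hD').ne']
  lift M to ℝ≥0 using hM'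
  obtain ⟨g, hg⟩ := exists_nearOptimal hM hS
  refine (hD f g x M hg).trans (mul_le_mul_left (le_trans ?_ hD'.le) _)
  exact_mod_cast le_self_add (a := D) (b := 1)

end Holmstedt

section Reiteration

variable {V : Type*} [AddCommGroup V] {N N₀ N₁ : V → ℝ≥0∞} {σ θ : ℝ} {α Γ : ℝ → ℝ}

/-- The Holmstedt-type estimate `K(ρ(t), f; N, N₁) ≈ t ^ (-σ) c(t) K(t, f; N₀, N₁)` for
`ρ(t) = t ^ (1-σ) c(t)`, on the logarithmic scale: `t = exp x` and `Γ = logProfile c`. The upper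
estimate loses an arbitrarily small power of `t`, which suffices for reiteration with `θ > 0`. -/
structure HolmstedtEstimate (N N₀ N₁ : V → ℝ≥0∞) (σ : ℝ) (Γ : ℝ → ℝ) : Prop where
  lower : ∃ C : ℝ≥0, ∀ f x, weightedK N₀ N₁ (fun x => -σ * x + Γ x) f x ≤
    C * Kf N N₁ (Real.exp ((1 - σ) * x + Γ x)) f
  upper : ∀ ε > 0, ∃ D : ℝ≥0, ∀ f x (S : ℝ≥0∞),
    (∀ y ≤ x, weightedK N₀ N₁ (fun x => -σ * x + Γ x) f y ≤ S * nnexp (-(ε * (x - y)))) →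
    Kf N N₁ (Real.exp ((1 - σ) * x + Γ x)) f ≤ D * S

lemma IsQuasiSeminorm.holmstedtEstimate_logNormR (hN₁ : IsQuasiSeminorm N₁) (N₀ : V → ℝ≥0∞)
    (hσ : 0 < σ) (hσ' : σ < 1) {r q : ℝ≥0∞} (hr : r ≠ 0) (hq : q ≠ 0) {β : ℝ → ℝ}
    (hα : SlowlyOscillating α) (hβ : SlowlyOscillating β) {x₀ : ℝ} (h₀ : headNorm r β x₀ ≠ ∞) :
    HolmstedtEstimate (logNormR N₀ N₁ σ r q β α) N₀ N₁ σ (α + logHeadNorm r β) := by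
  have hscale (x : ℝ) : (1 - σ) * x + (α x + logHeadNorm r β x) =
      x + (-σ * x + (α x + logHeadNorm r β x)) := by
    ring
  constructor
  · simpa only [Pi.add_apply, hscale] using hN₁.exists_weightedK_le_Kf_logNormR N₀ σ hα hβ hr hq h₀
  · intro ε hε
    simpa only [Pi.add_apply, hscale] using hN₁.exists_Kf_logNormR_le N₀ hσ hσ' q hα hβ hr h₀ hε

/-- The logarithmic profile of `a^#(t) = c(t) ^ (1-θ) a(ρ(t))` with `ρ(t) = t ^ (1-σ) c(t)`, where
`α = logProfile a` and `Γ = logProfile c`. -/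
def sharpProfile (θ σ : ℝ) (Γ α : ℝ → ℝ) (x : ℝ) : ℝ :=
  (1 - θ) * Γ x + α ((1 - σ) * x + Γ x)

lemma SlowlyOscillating.sharpProfile (hΓ : SlowlyOscillating Γ) (hα : SlowlyOscillating α)
    (θ σ : ℝ) : SlowlyOscillating (sharpProfile θ σ Γ α) :=
  (hΓ.const_mul (1 - θ)).add (hα.comp_linear_add hΓ (1 - σ))

lemma weightedK_sharpProfile (N₀ N₁ : V → ℝ≥0∞) (θ σ : ℝ) (Γ α : ℝ → ℝ) (f : V) (x : ℝ) :
    weightedK N₀ N₁ (fun x => -((1 - θ) * σ + θ) * x + sharpProfile θ σ Γ α x) f x =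
      nnexp (-θ * ((1 - σ) * x + Γ x) + α ((1 - σ) * x + Γ x)) *
        weightedK N₀ N₁ (fun x => -σ * x + Γ x) f x := by
  rw [weightedK, weightedK, nnexp_mul_nnexp_mul, sharpProfile]
  ring_nf

namespace HolmstedtEstimate

lemma exists_eLpNorm_sharp_le (h : HolmstedtEstimate N N₀ N₁ σ Γ) (hσ' : σ < 1)
    (hΓ : SlowlyOscillating Γ) (hα : SlowlyOscillating α) (θ : ℝ) (r : ℝ≥0∞) :
    ∃ D : ℝ≥0, ∀ f,
      eLpNorm (weightedK N₀ N₁ (fun x => -((1 - θ) * σ + θ) * x + sharpProfile θ σ Γ α x) f)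
        r volume ≤ D * eLpNorm (weightedK N N₁ (fun x => -θ * x + α x) f) r volume := by
  obtain ⟨C, hC⟩ := h.lower
  obtain ⟨e, -, hCe⟩ := exists_le_nnexp C
  obtain ⟨c, hc, hF⟩ :=
    (hΓ.sharpProfile hα θ σ).exists_moderate_weightedK (-((1 - θ) * σ + θ)) N₀ N₁
  obtain ⟨d, hd, hG⟩ := hα.exists_moderate_weightedK (-θ) N N₁
  obtain ⟨b, hb, hcoarse⟩ := hΓ.exists_abs_sub_le_mul_linear_add (sub_pos.2 hσ')
  obtain ⟨D, hD⟩ := Moderate.exists_eLpNorm_le_of_le_comp hc hd hb e r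
  refine ⟨D, fun f => hD _ _ _ (hF f) (hG f) (fun x => ?_) hcoarse⟩
  rw [weightedK_sharpProfile, weightedK.eq_def N, mul_left_comm]
  refine mul_le_mul_right ((hC f x).trans ?_) _
  gcongr

lemma exists_weightedK_comp_le_iSup (h : HolmstedtEstimate N N₀ N₁ σ Γ) (hσ' : σ < 1) (hθ : 0 < θ)
    (hΓ : SlowlyOscillating Γ) (hα : SlowlyOscillating α) :
    ∃ e δ : ℝ, 0 < δ ∧ ∀ f x,
      weightedK N N₁ (fun x => -θ * x + α x) f ((1 - σ) * x + Γ x) ≤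
        nnexp e * ⨆ y, nnexp (-(δ * |x - y|)) * weightedK N₀ N₁
          (fun x => -((1 - θ) * σ + θ) * x + sharpProfile θ σ Γ α x) f y := by
  set v : ℝ → ℝ := fun x => -θ * ((1 - σ) * x + Γ x) + α ((1 - σ) * x + Γ x) with hv
  obtain ⟨δ, hδ, hδθ⟩ : ∃ δ : ℝ, 0 < δ ∧ 3 * δ = θ * (1 - σ) :=
    ⟨θ * (1 - σ) / 3, by have := sub_pos.2 hσ'; positivity, by ring⟩
  obtain ⟨C, hC⟩ := (hΓ.const_mul (-θ)).add (hα.comp_linear_add hΓ (1 - σ)) δ hδ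
  have hdecay (x y : ℝ) (hyx : y ≤ x) : v x - v y ≤ C - 2 * δ * (x - y) := by
    have := hC x y
    rw [abs_of_nonneg (sub_nonneg.2 hyx)] at this
    simp only [Pi.add_apply] at this
    have hlin : 3 * δ * (x - y) = θ * (1 - σ) * (x - y) := by rw [hδθ]
    simp only [hv]
    linarith
  obtain ⟨D, hD⟩ := h.upper δ hδ
  obtain ⟨e, -, hDe⟩ := exists_le_nnexp D
  refine ⟨e + C, δ, hδ, fun f x => ?_⟩
  set F := weightedK N₀ N₁ (fun x => -((1 - θ) * σ + θ) * x + sharpProfile θ σ Γ α x) f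
  set S := ⨆ y, nnexp (-(δ * |x - y|)) * F y
  have hS (y : ℝ) (hyx : y ≤ x) : weightedK N₀ N₁ (fun x => -σ * x + Γ x) f y ≤
      nnexp (C - v x) * S * nnexp (-(δ * (x - y))) := by
    have hF : nnexp (v y) * weightedK N₀ N₁ (fun x => -σ * x + Γ x) f y ≤
        nnexp (δ * (x - y)) * S := by
      rw [← weightedK_sharpProfile, ← neg_neg (δ * (x - y)), ← nnexp_mul_le_iff,
        ← abs_of_nonneg (sub_nonneg.2 hyx)]
      exact le_iSup (fun y => (nnexp (-(δ * |x - y|)) : ℝ≥0∞) * F y) y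
    refine (nnexp_mul_le_iff.1 hF).trans ?_
    rw [nnexp_mul_nnexp_mul, mul_right_comm, ← coe_nnexp_add]
    exact mul_le_mul_left (coe_nnexp_le (by linarith [hdecay x y hyx])) _
  calc nnexp (v x) * Kf N N₁ (Real.exp ((1 - σ) * x + Γ x)) f
      ≤ nnexp (v x) * (nnexp e * (nnexp (C - v x) * S)) := by
        gcongr
        exact (hD f x _ hS).trans (by gcongr)
    _ = nnexp (e + C) * S := by
        rw [nnexp_mul_nnexp_mul, nnexp_mul_nnexp_mul]; ring_nf

lemma exists_eLpNorm_le_sharp (h : HolmstedtEstimate N N₀ N₁ σ Γ) (hσ' : σ < 1) (hθ : 0 < θ)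
    (hΓ : SlowlyOscillating Γ) (hα : SlowlyOscillating α) (r : ℝ≥0∞) :
    ∃ D : ℝ≥0, ∀ f, eLpNorm (weightedK N N₁ (fun x => -θ * x + α x) f) r volume ≤
      D * eLpNorm (weightedK N₀ N₁
        (fun x => -((1 - θ) * σ + θ) * x + sharpProfile θ σ Γ α x) f) r volume := by
  obtain ⟨e, δ, hδ, hle⟩ := h.exists_weightedK_comp_le_iSup hσ' hθ hΓ hα
  obtain ⟨c, hc, hF⟩ :=
    (hΓ.sharpProfile hα θ σ).exists_moderate_weightedK (-((1 - θ) * σ + θ)) N₀ N₁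
  obtain ⟨d, hd, hG⟩ := hα.exists_moderate_weightedK (-θ) N N₁
  obtain ⟨ψ, b, hb, hψ, hcoarse⟩ := hΓ.exists_coarse_rightInverse (sub_pos.2 hσ')
  obtain ⟨D, hD⟩ := Moderate.exists_eLpNorm_le_of_le_comp hd hδ.le hb (d * (1 + b) + e) r
  obtain ⟨D', hD'⟩ := Moderate.exists_eLpNorm_iSup_le hc hδ r
  refine ⟨D * D', fun f => (hD _ _ ψ (hG f) (Moderate.iSup_nnexp_neg_mul hδ.le
    (weightedK N₀ N₁ (fun x => -((1 - θ) * σ + θ) * x + sharpProfile θ σ Γ α x) f))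
    (fun z => ?_) hcoarse).trans ?_⟩
  · rw [coe_nnexp_add, mul_assoc]
    refine (hG f z ((1 - σ) * ψ z + Γ (ψ z))).trans (mul_le_mul' (coe_nnexp_le ?_) (hle f (ψ z)))
    gcongr
    exact abs_sub_comm z _ ▸ hψ z
  · rw [ENNReal.coe_mul, mul_assoc]
    exact mul_le_mul_right (hD' _ (hF f)) _

end HolmstedtEstimate

end Reiteration

section SharpWeight

variable {a b c ρ : ℝ → ℝ} {r : ℝ≥0∞}

lemma pos_of_eq_mul_LqNorm (hr : r ≠ 0) (ha : ∀ t ∈ Ioi (0 : ℝ), 0 < a t)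
    (hb : ∀ t ∈ Ioi (0 : ℝ), 0 < b t) (hβ : SlowlyOscillating (logProfile b)) {x₀ : ℝ}
    (h₀ : headNorm r (logProfile b) x₀ ≠ ∞)
    (hc : ∀ t, c t = a t * (LqNorm r (Ioo 0 t) (svWgt r b)).toReal) :
    ∀ t ∈ Ioi (0 : ℝ), 0 < c t := by
  intro t ht
  rw [hc, ← Real.exp_log ht, LqNorm_Ioo_svWgt_eq_headNorm hr hb]
  exact mul_pos (ha _ (Real.exp_pos _))
    (ENNReal.toReal_pos (headNorm_ne_zero hβ hr _) (headNorm_ne_top hβ h₀ _))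

lemma logProfile_of_eq_mul_LqNorm (hr : r ≠ 0) (ha : ∀ t ∈ Ioi (0 : ℝ), 0 < a t)
    (hb : ∀ t ∈ Ioi (0 : ℝ), 0 < b t) (hβ : SlowlyOscillating (logProfile b)) {x₀ : ℝ}
    (h₀ : headNorm r (logProfile b) x₀ ≠ ∞)
    (hc : ∀ t, c t = a t * (LqNorm r (Ioo 0 t) (svWgt r b)).toReal) :
    logProfile c = logProfile a + logHeadNorm r (logProfile b) := by
  funext x
  rw [logProfile, hc, LqNorm_Ioo_svWgt_eq_headNorm hr hb]
  exact Real.log_mul (ha _ (Real.exp_pos x)).ne'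
    (ENNReal.toReal_pos (headNorm_ne_zero hβ hr x) (headNorm_ne_top hβ h₀ x)).ne'

lemma logProfile_sharp {σ : ℝ} (θ : ℝ) (ha : ∀ t ∈ Ioi (0 : ℝ), 0 < a t)
    (hc : ∀ t ∈ Ioi (0 : ℝ), 0 < c t) (hρ : ∀ t, ρ t = t ^ (1 - σ) * c t) :
    logProfile (fun t => c t ^ (1 - θ) * a (ρ t)) =
      sharpProfile θ σ (logProfile c) (logProfile a) := by
  funext x
  have hcx := hc _ (Real.exp_pos x)
  have hax := ha _ (Real.exp_pos ((1 - σ) * x + logProfile c x))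
  have hρx : ρ (Real.exp x) = Real.exp ((1 - σ) * x + logProfile c x) := by
    rw [hρ, logProfile, Real.exp_add, Real.exp_log hcx, mul_comm (1 - σ), Real.exp_mul]
  rw [logProfile, hρx, Real.log_mul (Real.rpow_pos_of_pos hcx _).ne' hax.ne', Real.log_rpow hcx]
  rfl

end SharpWeight

lemma equivNorms_of_le {V : Type*} {N N' : V → ℝ≥0∞} (h : ∃ D : ℝ≥0, ∀ f, N' f ≤ D * N f)
    (h' : ∃ D : ℝ≥0, ∀ f, N f ≤ D * N' f) : EquivNorms N N' := by
  obtain ⟨D, hD⟩ := h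
  obtain ⟨D', hD'⟩ := h'
  refine ⟨↑(D + D' + 1), by simp, ENNReal.coe_ne_top, fun f => ⟨?_, (hD' f).trans ?_⟩⟩
  · rw [ENNReal.inv_mul_le_iff (by simp) ENNReal.coe_ne_top]
    refine (hD f).trans ?_
    gcongr
    exact le_add_right le_self_add
  · gcongr
    exact le_add_right le_add_self

lemma HolmstedtEstimate.equivNorms_normK {V : Type*} [AddCommGroup V] {N N₀ N₁ : V → ℝ≥0∞}
    {σ θ : ℝ} {a c ρ : ℝ → ℝ} (h : HolmstedtEstimate N N₀ N₁ σ (logProfile c))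
    (hσ' : σ < 1) (hθ : 0 < θ) {r : ℝ≥0∞} (hr : r ≠ 0) (ha : ∀ t ∈ Ioi (0 : ℝ), 0 < a t)
    (hc : ∀ t ∈ Ioi (0 : ℝ), 0 < c t) (hα : SlowlyOscillating (logProfile a))
    (hΓ : SlowlyOscillating (logProfile c)) (hρ : ∀ t, ρ t = t ^ (1 - σ) * c t) :
    EquivNorms (normK N N₁ θ r a)
      (normK N₀ N₁ ((1 - θ) * σ + θ) r (fun t => c t ^ (1 - θ) * a (ρ t))) := by
  have hsharp : ∀ t ∈ Ioi (0 : ℝ), 0 < c t ^ (1 - θ) * a (ρ t) := fun t ht =>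
    mul_pos (Real.rpow_pos_of_pos (hc t ht) _)
      (ha _ (hρ t ▸ mul_pos (Real.rpow_pos_of_pos ht _) (hc t ht)))
  refine equivNorms_of_le ?_ ?_ <;>
    simp only [normK_eq_eLpNorm hr _ ha, normK_eq_eLpNorm hr _ hsharp, logProfile_sharp θ ha hc hρ]
  · exact h.exists_eLpNorm_sharp_le hσ' hΓ hα θ r
  · exact h.exists_eLpNorm_le_sharp hσ' hθ hΓ hα r

theorem theorem22_general {V : Type*} [AddCommGroup V] (N₀ : V → ℝ≥0∞) {N₁ : V → ℝ≥0∞}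
    (hN₁ : IsQuasiSeminorm N₁) {θ₀ θ : ℝ} (hθ₀ : 0 < θ₀) (hθ₀' : θ₀ < 1) (hθ : 0 < θ)
    {q₀ r r₀ : ℝ≥0∞} (hq₀ : q₀ ≠ 0) (hr : r ≠ 0) (hr₀ : r₀ ≠ 0) {a a₀ b₀ : ℝ → ℝ}
    (ha : SlowlyVarying a) (ha₀ : SlowlyVarying a₀) (hb₀ : SlowlyVarying b₀)
    (hfin : LqNorm r₀ (Ioo 0 1) (svWgt r₀ fun s => b₀ s / a₀ s) ≠ ∞) {c₀ ρ : ℝ → ℝ}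
    (hc₀ : ∀ t, c₀ t = a₀ t * (LqNorm r₀ (Ioo 0 t) (svWgt r₀ fun s => b₀ s / a₀ s)).toReal)
    (hρ : ∀ t, ρ t = t ^ (1 - θ₀) * c₀ t) :
    EquivNorms (normK (normR N₀ N₁ θ₀ r₀ q₀ b₀ a₀) N₁ θ r a)
      (normK N₀ N₁ ((1 - θ) * θ₀ + θ) r (fun t => c₀ t ^ (1 - θ) * a (ρ t))) := by
  have hquot : ∀ t ∈ Ioi (0 : ℝ), 0 < b₀ t / a₀ t :=
    fun t ht => div_pos (hb₀.2.1 t ht) (ha₀.2.1 t ht)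
  have hα₀ := ha₀.slowlyOscillating_logProfile
  have hβ : SlowlyOscillating (logProfile fun t => b₀ t / a₀ t) :=
    logProfile_div ha₀.2.1 hb₀.2.1 ▸ hb₀.slowlyOscillating_logProfile.sub hα₀
  have hhead : headNorm r₀ (logProfile fun t => b₀ t / a₀ t) 0 ≠ ∞ := by
    rwa [← LqNorm_Ioo_svWgt_eq_headNorm hr₀ hquot, Real.exp_zero]
  have hprofile := logProfile_of_eq_mul_LqNorm hr₀ ha₀.2.1 hquot hβ hhead hc₀
  have hΓ : SlowlyOscillating (logProfile c₀) :=
    hprofile ▸ hα₀.add (slowlyOscillating_logHeadNorm hβ hr₀ hhead)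
  have hHolmstedt : HolmstedtEstimate (normR N₀ N₁ θ₀ r₀ q₀ b₀ a₀) N₀ N₁ θ₀ (logProfile c₀) := by
    rw [normR_eq_logNormR hq₀ hr₀ θ₀ ha₀.2.1 hb₀.2.1, hprofile]
    exact hN₁.holmstedtEstimate_logNormR N₀ hθ₀ hθ₀' hr₀ hq₀ hα₀ hβ hhead
  exact hHolmstedt.equivNorms_normK hθ₀' hθ hr ha.2.1
    (pos_of_eq_mul_LqNorm hr₀ ha₀.2.1 hquot hβ hhead hc₀) ha.slowlyOscillating_logProfile hΓ hρ

theorem theorem22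
    (A₀ A₁ : QuasiBanach E)
    (hne : ∃ x : E, x ≠ 0 ∧ A₀.N x ≠ ∞ ∧ A₁.N x ≠ ∞)
    (θ₀ θ : ℝ) (hθ₀ : 0 < θ₀) (hθ₀' : θ₀ < 1) (hθ : 0 < θ) (hθ' : θ ≤ 1)
    (q₀ r r₀ : ℝ≥0∞) (hq₀ : 0 < q₀) (hr : 0 < r) (hr₀ : 0 < r₀)
    (a a₀ b₀ : ℝ → ℝ)
    (h_sv_a : SlowlyVarying a)
    (h_sv_a₀ : SlowlyVarying a₀)
    (h_sv_b₀ : SlowlyVarying b₀)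
    (hfin : LqNorm r₀ (Ioo 0 1) (svWgt r₀ (fun s => b₀ s / a₀ s)) ≠ ∞)
    (hθ1 : θ = 1 → LqNorm r (Ioo 0 1) (svWgt r (fun s => a s)) ≠ ∞)
    (c₀ ρ : ℝ → ℝ)
    (hc₀ : ∀ t, c₀ t = a₀ t * (LqNorm r₀ (Ioo 0 t) (svWgt r₀ (fun s => b₀ s / a₀ s))).toReal)
    (hρ : ∀ t, ρ t = t ^ (1 - θ₀) * c₀ t) :
    EquivNorms
      (normK (normR A₀.N A₁.N θ₀ r₀ q₀ b₀ a₀) A₁.N θ r a)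
      (normK A₀.N A₁.N ((1 - θ) * θ₀ + θ) r (fun t => c₀ t ^ (1 - θ) * a (ρ t))) :=
  theorem22_general A₀.N A₁.isQuasiSeminorm hθ₀ hθ₀' hθ hq₀.ne' hr.ne' hr₀.ne' h_sv_a h_sv_a₀
    h_sv_b₀ hfin hc₀ hρ

end
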